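/- arXiv:1903.09042 — 2 statements merged into one kernel-verified Lean document; each statement's English description precedes it below -/
import Mathlib

section
/- Let 1<α≤2, let λ₁* be the largest real zero of E_{α,α−1}(λ)=0, and let λ∈ℝ be such that E_{α,α−1}(λ)≠0. Then the Green's function G associated to the parameter λ satisfies G(t,s)>0 for all t,s∈(0,1) if and only if λ>λ₁*. -/
/-- The two-parameter Mittag-Leffler function `E_{α,β}(x) = ∑_{k=0}^∞ x^k / Γ(αk+β)`. -/
noncomputable def ML (α β x : ℝ) : ℝ := ∑' k : ℕ, x ^ k / Real.Gamma (α * k + β)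

/-- The Green's function of the mixed problem
`D^α u - λ u + y = 0`, `lim_{t→0⁺} t^{2-α}u(t) = 0`, `u'(1) = 0`. -/
noncomputable def greenG (α lam : ℝ) (t s : ℝ) : ℝ :=
  if s ≤ t then
    t ^ (α - 1) * ML α α (lam * t ^ α) * ML α (α - 1) (lam * (1 - s) ^ α) /
      ((1 - s) ^ (2 - α) * ML α (α - 1) lam) -
    (t - s) ^ (α - 1) * ML α α (lam * (t - s) ^ α)
  else
    t ^ (α - 1) * ML α α (lam * t ^ α) * ML α (α - 1) (lam * (1 - s) ^ α) /
      ((1 - s) ^ (2 - α) * ML α (α - 1) lam)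

/-!
Write `e(t) = t ^ (α - 1) E_{α,α}(λ t ^ α)`, with derivative
`f(t) = t ^ (α - 2) E_{α,α-1}(λ t ^ α)`. Then `G(t,s) = e(t) f(1 - s) / f(1) - e(t - s)`, the last
term being present only for `s ≤ t`. If `λ < λ₁*`, then `λ₁* < 0`, hence `λ (1 - s) ^ α = λ₁*` for
some `s ∈ (0,1)`, and `G(t,s) = 0` for `t < s`. If `λ > λ₁*`, then `f > 0` on `(0,1]`, and what
remains is `e(t - s) f(1) < e(t) f(1 - s)`.

For `λ ≤ 0`, the function `E_{α,β+γ}` is a Beta average of `E_{α,β}`; this makes `E_{α,α-1}`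
increasing on `[λ,0]`, hence `f(1) ≤ f(1 - s)`, while `e(t - s) < e(t)`.

For `λ ≥ 0`, the inequality follows from the strict log-concavity of `e`, which is obtained by
discretization: `e` is a scaling limit of the Taylor coefficients of `1 / ((1 - z) ^ α - c)`. These
satisfy a linear recurrence governed by the coefficients of `(1 - z) ^ α`, which are nonnegative
from order `2` on because `1 ≤ α ≤ 2`, and by induction their successive ratios decrease.
Log-concavity passes to the limit, and analyticity makes it strict.
-/

namespace MittagLeffler

open Real Set Filter Topology
open Ring (multichoose)

/-! ### The Mittag-Leffler function and its kernel -/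

section Basic

variable {α β : ℝ}

lemma rpow_mul_exp_neg_le_Gamma_add_one {b y : ℝ} (hb : 0 ≤ b) (hy : 0 ≤ y) :
    y ^ b * exp (-y) ≤ Gamma (b + 1) := by
  have hint : MeasureTheory.IntegrableOn (fun u ↦ exp (-u) * u ^ b) (Ioi 0) := by
    simpa using GammaIntegral_convergent (by linarith : 0 < b + 1)
  calc y ^ b * exp (-y) = ∫ u in Ioi y, exp (-u) * y ^ b := by
        rw [MeasureTheory.integral_mul_const, integral_exp_neg_Ioi, mul_comm]
    _ ≤ ∫ u in Ioi y, exp (-u) * u ^ b := by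
        refine MeasureTheory.setIntegral_mono_on ((integrableOn_exp_neg_Ioi y).mul_const _)
          (hint.mono_set (Ioi_subset_Ioi hy)) measurableSet_Ioi fun u hu ↦ ?_
        gcongr
        exact (mem_Ioi.1 hu).le
    _ ≤ ∫ u in Ioi 0, exp (-u) * u ^ b := by
        refine MeasureTheory.setIntegral_mono_set hint ?_ (Ioi_subset_Ioi hy).eventuallyLE
        filter_upwards [MeasureTheory.ae_restrict_mem measurableSet_Ioi] with u hu
        exact mul_nonneg (exp_pos _).le (rpow_nonneg (mem_Ioi.1 hu).le _)
    _ = Gamma (b + 1) := by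
        rw [Gamma_eq_integral (by linarith), add_sub_cancel_right]

lemma Gamma_mul_add_pos (hα : 0 < α) (hβ : 0 < β) (k : ℕ) : 0 < Gamma (α * k + β) :=
  Gamma_pos_of_pos (by positivity)

lemma summable_abs_pow_div_Gamma (hα : 0 < α) (hβ : 0 < β) (x : ℝ) :
    Summable fun k : ℕ ↦ |x| ^ k / Gamma (α * k + β) := by
  obtain ⟨y, hy, hxy⟩ : ∃ y : ℝ, 0 < y ∧ |x| < y ^ α :=
    ((eventually_gt_atTop 0).and ((tendsto_rpow_atTop hα).eventually_gt_atTop _)).exists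
  have hr0 : 0 ≤ |x| / y ^ α := by positivity
  have hr : ‖|x| / y ^ α‖ < 1 := by
    rw [norm_of_nonneg hr0]
    exact (div_lt_one (by positivity)).2 hxy
  have hs : Summable fun k : ℕ ↦
      exp y * y ^ (-β) * (α * (k * (|x| / y ^ α) ^ k) + β * (|x| / y ^ α) ^ k) := by
    have h1 := summable_pow_mul_geometric_of_norm_lt_one 1 hr
    simp only [pow_one] at h1
    exact ((h1.mul_left α).add ((summable_geometric_of_norm_lt_one hr).mul_left β)).mul_left _
  refine hs.of_nonneg_of_le
    (fun k ↦ div_nonneg (by positivity) (Gamma_mul_add_pos hα hβ k).le) fun k ↦ ?_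
  have hb : 0 < α * k + β := by positivity
  have hΓ := rpow_mul_exp_neg_le_Gamma_add_one hb.le hy.le
  rw [Gamma_add_one hb.ne'] at hΓ
  rw [div_le_iff₀ (Gamma_mul_add_pos hα hβ k)]
  calc |x| ^ k = exp y * y ^ (-β) * (|x| / y ^ α) ^ k * (y ^ (α * k + β) * exp (-y)) := by
        rw [rpow_add hy, rpow_mul_natCast hy.le, rpow_neg hy.le, exp_neg, div_pow]
        field_simp
    _ ≤ exp y * y ^ (-β) * (|x| / y ^ α) ^ k * ((α * k + β) * Gamma (α * k + β)) := by gcongr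
    _ = _ := by ring

lemma summable_pow_div_Gamma (hα : 0 < α) (hβ : 0 < β) (x : ℝ) :
    Summable fun k : ℕ ↦ x ^ k / Gamma (α * k + β) := by
  refine .of_norm ((summable_abs_pow_div_Gamma hα hβ x).congr fun k ↦ ?_)
  rw [norm_div, norm_pow, norm_eq_abs, norm_of_nonneg (Gamma_mul_add_pos hα hβ k).le]

lemma hasFPowerSeriesOnBall_ML (hα : 0 < α) (hβ : 0 < β) :
    HasFPowerSeriesOnBall (ML α β)
      (FormalMultilinearSeries.ofScalars ℝ fun k : ℕ ↦ (Gamma (α * k + β))⁻¹) 0 ⊤ := by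
  set p := FormalMultilinearSeries.ofScalars ℝ fun k : ℕ ↦ (Gamma (α * k + β))⁻¹ with hp
  have hr : p.radius = ⊤ := by
    refine FormalMultilinearSeries.radius_eq_top_of_summable_norm _ fun r ↦
      (summable_abs_pow_div_Gamma hα hβ r).congr fun k ↦ ?_
    rw [FormalMultilinearSeries.ofScalars_norm, norm_inv,
      norm_of_nonneg (Gamma_mul_add_pos hα hβ k).le, NNReal.abs_eq, div_eq_inv_mul]
  have hsum : p.sum = ML α β := by
    ext x
    refine tsum_congr fun k ↦ ?_
    simp [hp, div_eq_mul_inv]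
  rw [← hr, ← hsum]
  exact p.hasFPowerSeriesOnBall (hr ▸ ENNReal.coe_lt_top)

lemma analyticAt_ML (hα : 0 < α) (hβ : 0 < β) (x : ℝ) : AnalyticAt ℝ (ML α β) x :=
  (hasFPowerSeriesOnBall_ML hα hβ).analyticAt_of_mem (by simp)

lemma continuous_ML (hα : 0 < α) (hβ : 0 < β) : Continuous (ML α β) :=
  continuous_iff_continuousAt.2 fun x ↦ (analyticAt_ML hα hβ x).continuousAt

lemma ML_pos_of_nonneg (hα : 0 < α) (hβ : 0 < β) {x : ℝ} (hx : 0 ≤ x) : 0 < ML α β x := by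
  have hΓ := Gamma_mul_add_pos hα hβ
  exact (summable_pow_div_Gamma hα hβ x).tsum_pos
    (fun k ↦ div_nonneg (by positivity) (hΓ k).le) 0 (by simpa using Gamma_pos_of_pos hβ)

lemma ML_eq_inv_Gamma_add (hα : 0 < α) (hβ : 0 < β) (x : ℝ) :
    ML α β x = (Gamma β)⁻¹ + x * ML α (α + β) x := by
  rw [ML, (summable_pow_div_Gamma hα hβ x).tsum_eq_zero_add, ML, ← tsum_mul_left]
  congr 1
  · simp
  · refine tsum_congr fun k ↦ ?_
    rw [pow_succ', mul_div_assoc]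
    push_cast
    ring_nf

lemma deriv_ML (hα : 0 < α) (hβ : 0 < β) (hαβ : 1 < α + β) (x : ℝ) :
    deriv (ML α β) x = (ML α (α + β - 1) x - (β - 1) * ML α (α + β) x) / α := by
  have hd : HasSum (fun k : ℕ ↦ x ^ k * ((k + 1) * (Gamma (α * (k + 1) + β))⁻¹))
      (deriv (ML α β) x) := by
    have h := ((hasFPowerSeriesOnBall_ML hα hβ).fderiv.hasSum (y := x) (by simp)).mapL
      (ContinuousLinearMap.apply ℝ ℝ 1)
    simpa [FormalMultilinearSeries.apply_eq_pow_smul_coeff] using h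
  have h₁ := (summable_pow_div_Gamma hα (sub_pos.2 hαβ) x).hasSum
  have h₂ := (summable_pow_div_Gamma hα (add_pos hα hβ) x).hasSum
  refine hd.unique (((h₁.sub (h₂.mul_left (β - 1))).div_const α).congr_fun fun k ↦ ?_)
  have hb : 0 < α * k + (α + β - 1) := by nlinarith [k.cast_nonneg (α := ℝ)]
  have hΓ : Gamma (α * (k + 1) + β) =
      (α * k + (α + β - 1)) * Gamma (α * k + (α + β - 1)) := by
    rw [← Gamma_add_one hb.ne']
    ring_nf
  have hΓ' : Gamma (α * k + (α + β)) = Gamma (α * (k + 1) + β) := by ring_nf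
  have hΓ₀ := (Gamma_pos_of_pos hb).ne'
  rw [hΓ', hΓ]
  have hb₀ := hb.ne'
  generalize hc : α * k + (α + β - 1) = b at *
  field_simp
  linear_combination x ^ k * hc

lemma mul_deriv_ML (hα : 0 < α) (hβ : 1 < β) (x : ℝ) :
    α * (x * deriv (ML α β) x) = ML α (β - 1) x - (β - 1) * ML α β x := by
  have hβ₀ : β - 1 ≠ 0 := (sub_pos.2 hβ).ne'
  have hΓ := Gamma_add_one hβ₀
  rw [sub_add_cancel] at hΓ
  have hΓ₀ : Gamma (β - 1) ≠ 0 := (Gamma_pos_of_pos (sub_pos.2 hβ)).ne'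
  rw [deriv_ML hα (by linarith) (by linarith), ML_eq_inv_Gamma_add hα (sub_pos.2 hβ),
    ML_eq_inv_Gamma_add hα (by linarith : 0 < β), hΓ, add_sub_assoc]
  field_simp
  ring

end Basic

/-- The kernel `t ^ (β - 1) E_{α,β}(λ t ^ α)`, whose Laplace transform is
`s ^ (α - β) / (s ^ α - λ)`. For `β = α` and `β = α - 1` these are the two ingredients of the
Green's function. -/
noncomputable def mlKernel (α β lam t : ℝ) : ℝ := t ^ (β - 1) * ML α β (lam * t ^ α)

section Kernel

variable {α β lam t : ℝ}

lemma mlKernel_one (α β lam : ℝ) : mlKernel α β lam 1 = ML α β lam := by simp [mlKernel]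

lemma mlKernel_zero_right (hβ : 1 < β) : mlKernel α β lam 0 = 0 := by
  rw [mlKernel, zero_rpow (sub_pos.2 hβ).ne', zero_mul]

lemma mlKernel_pos (ht : 0 < t) (h : 0 < ML α β (lam * t ^ α)) : 0 < mlKernel α β lam t :=
  mul_pos (rpow_pos_of_pos ht _) h

lemma mlKernel_pos_of_nonneg (hα : 0 < α) (hβ : 0 < β) (hlam : 0 ≤ lam) (ht : 0 < t) :
    0 < mlKernel α β lam t :=
  mlKernel_pos ht (ML_pos_of_nonneg hα hβ (by positivity))

lemma continuous_mlKernel (hα : 0 < α) (hβ : 1 < β) : Continuous (mlKernel α β lam) :=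
  (continuous_id.rpow_const fun _ ↦ .inr (sub_nonneg.2 hβ.le)).mul
    ((continuous_ML hα (by linarith)).comp
      (continuous_const.mul (continuous_id.rpow_const fun _ ↦ .inr hα.le)))

lemma analyticAt_mlKernel (hα : 0 < α) (hβ : 0 < β) (ht : 0 < t) :
    AnalyticAt ℝ (mlKernel α β lam) t := by
  have hrpow (p : ℝ) : AnalyticAt ℝ (fun t : ℝ ↦ t ^ p) t :=
    (contDiffAt_rpow_const_of_ne ht.ne').analyticAt
  exact (hrpow _).mul ((analyticAt_ML hα hβ _).comp (analyticAt_const.mul (hrpow α)))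

lemma hasDerivAt_mlKernel (hα : 0 < α) (hβ : 1 < β) (ht : 0 < t) :
    HasDerivAt (mlKernel α β lam) (mlKernel α (β - 1) lam t) t := by
  have hE := (analyticAt_ML hα (zero_lt_one.trans hβ) (lam * t ^ α)).differentiableAt.hasDerivAt
  have hx := (hasDerivAt_rpow_const (p := α) (.inl ht.ne')).const_mul lam
  have hpow := hasDerivAt_rpow_const (p := β - 1) (.inl ht.ne')
  convert! hpow.mul (hE.comp t hx) using 1
  have hd := mul_deriv_ML hα hβ (lam * t ^ α)
  have h₁ : t ^ (β - 1) = t ^ (β - 1 - 1) * t := by rw [← rpow_add_one ht.ne', sub_add_cancel]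
  have h₂ : t ^ α = t ^ (α - 1) * t := by rw [← rpow_add_one ht.ne', sub_add_cancel]
  simp only [mlKernel, Function.comp_apply]
  rw [h₁]
  linear_combination -t ^ (β - 1 - 1) * hd +
    t ^ (β - 1 - 1) * deriv (ML α β) (lam * t ^ α) * α * lam * h₂

end Kernel

/-! ### Beta averages and the case `λ ≤ 0` -/

section Beta

variable {a b : ℝ}

lemma ofReal_beta_integrand (a b : ℝ) {u : ℝ} (hu : u ∈ Icc 0 1) :
    (u : ℂ) ^ ((a : ℂ) - 1) * (1 - (u : ℂ)) ^ ((b : ℂ) - 1) =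
      ((u ^ (a - 1) * (1 - u) ^ (b - 1) : ℝ) : ℂ) := by
  rw [Complex.ofReal_mul, Complex.ofReal_cpow hu.1, Complex.ofReal_cpow (sub_nonneg.2 hu.2)]
  push_cast
  rfl

lemma intervalIntegrable_beta (ha : 0 < a) (hb : 0 < b) :
    IntervalIntegrable (fun u : ℝ ↦ u ^ (a - 1) * (1 - u) ^ (b - 1)) MeasureTheory.volume 0 1 := by
  have h : IntervalIntegrable (fun u : ℝ ↦ ((u ^ (a - 1) * (1 - u) ^ (b - 1) : ℝ) : ℂ))
      MeasureTheory.volume 0 1 := by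
    refine (Complex.betaIntegral_convergent (u := a) (v := b) (by simpa) (by simpa)).congr
      fun u hu ↦ ?_
    rw [uIoc_of_le zero_le_one] at hu
    exact ofReal_beta_integrand a b (Ioc_subset_Icc_self hu)
  rw [intervalIntegrable_iff] at h ⊢
  exact h.re

lemma integral_beta (ha : 0 < a) (hb : 0 < b) :
    ∫ u in (0 : ℝ)..1, u ^ (a - 1) * (1 - u) ^ (b - 1) = Gamma a * Gamma b / Gamma (a + b) := by
  have h : Complex.betaIntegral a b =
      ((∫ u in (0 : ℝ)..1, u ^ (a - 1) * (1 - u) ^ (b - 1) : ℝ) : ℂ) := by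
    rw [← intervalIntegral.integral_ofReal]
    refine intervalIntegral.integral_congr fun u hu ↦ ?_
    rw [uIcc_of_le zero_le_one] at hu
    exact ofReal_beta_integrand a b hu
  have hre := ProbabilityTheory.beta_eq_betaIntegralReal a b ha hb
  rw [h, Complex.ofReal_re] at hre
  exact hre.symm

end Beta

section Convolution

variable {α β γ : ℝ}

lemma tsum_pow_div_Gamma_mul_rpow {u : ℝ} (hu : 0 < u) (α β x w : ℝ) :
    ∑' k : ℕ, x ^ k / Gamma (α * k + β) * (u ^ (α * k + β - 1) * w) =
      u ^ (β - 1) * w * ML α β (x * u ^ α) := by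
  rw [ML, ← tsum_mul_left]
  refine tsum_congr fun k ↦ ?_
  rw [add_sub_assoc, rpow_add hu, rpow_mul_natCast hu.le, mul_pow]
  ring

lemma Gamma_mul_ML_add (hα : 0 < α) (hβ : 0 < β) (hγ : 0 < γ) (x : ℝ) :
    Gamma γ * ML α (β + γ) x =
      ∫ u in (0 : ℝ)..1, u ^ (β - 1) * (1 - u) ^ (γ - 1) * ML α β (x * u ^ α) := by
  have hb (k : ℕ) : 0 < α * k + β := by positivity
  have hΓ := Gamma_mul_add_pos hα hβ
  set F : ℕ → ℝ → ℝ := fun k u ↦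
    x ^ k / Gamma (α * k + β) * (u ^ (α * k + β - 1) * (1 - u) ^ (γ - 1)) with hF
  have hint (k : ℕ) (c : ℝ) : ∫ u in Ioc (0 : ℝ) 1,
      c / Gamma (α * k + β) * (u ^ (α * k + β - 1) * (1 - u) ^ (γ - 1)) =
        Gamma γ * (c / Gamma (α * k + (β + γ))) := by
    rw [← intervalIntegral.integral_of_le zero_le_one, intervalIntegral.integral_const_mul,
      integral_beta (hb k) hγ, add_assoc]
    have := (hΓ k).ne'
    field_simp
  have hnorm (k : ℕ) : ∫ u in Ioc (0 : ℝ) 1, ‖F k u‖ =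
      Gamma γ * (|x| ^ k / Gamma (α * k + (β + γ))) := by
    rw [← hint k (|x| ^ k)]
    refine MeasureTheory.setIntegral_congr_fun measurableSet_Ioc fun u hu ↦ ?_
    have h₀ := rpow_nonneg hu.1.le (α * k + β - 1)
    have h₁ := rpow_nonneg (sub_nonneg.2 hu.2) (γ - 1)
    simp only [hF, norm_mul, norm_div, norm_pow, norm_eq_abs, abs_of_nonneg h₀,
      abs_of_nonneg h₁, abs_of_pos (hΓ k)]
  have hsum := MeasureTheory.hasSum_integral_of_summable_integral_norm
    (μ := MeasureTheory.volume.restrict (Ioc (0 : ℝ) 1)) (F := F)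
    (fun k ↦ ((intervalIntegrable_iff_integrableOn_Ioc_of_le zero_le_one).1
      (intervalIntegrable_beta (hb k) hγ)).const_mul _)
    (by simpa only [hnorm] using
      (summable_abs_pow_div_Gamma hα (add_pos hβ hγ) x).mul_left (Gamma γ))
  rw [intervalIntegral.integral_of_le zero_le_one, ← MeasureTheory.setIntegral_congr_fun
    measurableSet_Ioc fun u hu ↦ tsum_pow_div_Gamma_mul_rpow hu.1 α β x _, ← hsum.tsum_eq,
    ML, ← tsum_mul_left]
  exact tsum_congr fun k ↦ (hint k _).symm

lemma mul_rpow_mem_Icc (hα : 0 ≤ α) {x u : ℝ} (hx : x ≤ 0) (hu : u ∈ Icc 0 1) :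
    x * u ^ α ∈ Icc x 0 :=
  ⟨le_mul_of_le_one_right hx (rpow_le_one hu.1 hu.2 hα),
    mul_nonpos_of_nonpos_of_nonneg hx (rpow_nonneg hu.1 _)⟩

lemma ML_add_pos (hα : 0 < α) (hβ : 0 < β) (hγ : 0 < γ) {x : ℝ} (hx : x ≤ 0)
    (h : ∀ y ∈ Icc x 0, 0 < ML α β y) : 0 < ML α (β + γ) x := by
  refine pos_of_mul_pos_right ?_ (Gamma_pos_of_pos hγ).le
  rw [Gamma_mul_ML_add hα hβ hγ]
  refine intervalIntegral.intervalIntegral_pos_of_pos_on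
    ((intervalIntegrable_beta hβ hγ).mul_continuousOn ((continuous_ML hα hβ).comp
      (continuous_const.mul (continuous_id.rpow_const fun _ ↦ .inr hα.le))).continuousOn)
    (fun u hu ↦ ?_) zero_lt_one
  exact mul_pos (mul_pos (rpow_pos_of_pos hu.1 _) (rpow_pos_of_pos (sub_pos.2 hu.2) _))
    (h _ (mul_rpow_mem_Icc hα.le hx (Ioo_subset_Icc_self hu)))

end Convolution

section Nonpositive

variable {α lam t s : ℝ}

lemma strictMonoOn_ML (hα₁ : 1 < α) (hα₂ : α ≤ 2)
    (h : ∀ y ∈ Icc lam 0, 0 < ML α (α - 1) y) : StrictMonoOn (ML α (α - 1)) (Icc lam 0) := by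
  have hα : 0 < α := by linarith
  have hβ : 0 < α - 1 := by linarith
  refine strictMonoOn_of_deriv_pos (convex_Icc _ _) (continuous_ML hα hβ).continuousOn
    fun x hx ↦ ?_
  rw [interior_Icc] at hx
  have hx' : ∀ y ∈ Icc x 0, 0 < ML α (α - 1) y := fun y hy ↦ h y ⟨hx.1.le.trans hy.1, hy.2⟩
  have h₁ : 0 < ML α (α + (α - 1)) x := add_comm (α - 1) α ▸ ML_add_pos hα hβ hα hx.2.le hx'
  have h₂ : 0 < ML α (α + (α - 1) - 1) x := by
    convert ML_add_pos hα hβ hβ hx.2.le hx' using 2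
    ring
  rw [deriv_ML hα hβ (by linarith)]
  refine div_pos (by nlinarith) hα

lemma strictMonoOn_mlKernel (hα : 1 < α) (hlam : lam ≤ 0)
    (h : ∀ y ∈ Icc lam 0, 0 < ML α (α - 1) y) : StrictMonoOn (mlKernel α α lam) (Icc 0 1) := by
  have hα₀ : 0 < α := by linarith
  refine strictMonoOn_of_deriv_pos (convex_Icc _ _) (continuous_mlKernel hα₀ hα).continuousOn
    fun t ht ↦ ?_
  rw [interior_Icc] at ht
  rw [(hasDerivAt_mlKernel hα₀ hα ht.1).deriv]
  exact mlKernel_pos ht.1 (h _ (mul_rpow_mem_Icc hα₀.le hlam (Ioo_subset_Icc_self ht)))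

lemma mlKernel_one_le (hα₁ : 1 < α) (hα₂ : α ≤ 2) (hlam : lam ≤ 0)
    (h : ∀ y ∈ Icc lam 0, 0 < ML α (α - 1) y) (ht₀ : 0 < t) (ht₁ : t ≤ 1) :
    mlKernel α (α - 1) lam 1 ≤ mlKernel α (α - 1) lam t := by
  have hmem : lam * t ^ α ∈ Icc lam 0 := mul_rpow_mem_Icc (by linarith) hlam ⟨ht₀.le, ht₁⟩
  have hpow : 1 ≤ t ^ (α - 1 - 1) :=
    one_le_rpow_of_pos_of_le_one_of_nonpos ht₀ ht₁ (by linarith)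
  rw [mlKernel_one, mlKernel]
  calc ML α (α - 1) lam ≤ ML α (α - 1) (lam * t ^ α) :=
        (strictMonoOn_ML hα₁ hα₂ h).monotoneOn (left_mem_Icc.2 hlam) hmem hmem.1
    _ ≤ _ := le_mul_of_one_le_left (h _ hmem).le hpow

lemma mlKernel_sub_mul_lt_of_nonpos (hα₁ : 1 < α) (hα₂ : α ≤ 2) (hlam : lam ≤ 0)
    (h : ∀ y ∈ Icc lam 0, 0 < ML α (α - 1) y) (hs : 0 < s) (hst : s ≤ t) (ht : t < 1) :
    mlKernel α α lam (t - s) * mlKernel α (α - 1) lam 1 <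
      mlKernel α α lam t * mlKernel α (α - 1) lam (1 - s) := by
  have he := strictMonoOn_mlKernel hα₁ hlam h
  have he₀ : 0 < mlKernel α α lam t := by
    rw [← mlKernel_zero_right (α := α) (lam := lam) hα₁]
    exact he (by simp) ⟨by linarith, ht.le⟩ (by linarith)
  have hf₁ : 0 < mlKernel α (α - 1) lam 1 := by
    rw [mlKernel_one]
    exact h lam (left_mem_Icc.2 hlam)
  calc mlKernel α α lam (t - s) * mlKernel α (α - 1) lam 1
      < mlKernel α α lam t * mlKernel α (α - 1) lam 1 := by
        gcongr
        exact he ⟨by linarith, by linarith⟩ ⟨by linarith, ht.le⟩ (by linarith)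
    _ ≤ mlKernel α α lam t * mlKernel α (α - 1) lam (1 - s) := by
        gcongr
        exact mlKernel_one_le hα₁ hα₂ hlam h (by linarith) (by linarith)

end Nonpositive

/-! ### Asymptotics of the Taylor coefficients of `(1 - z) ^ (-b)` -/

section Multichoose

variable {x : ℝ}

lemma factorial_mul_multichoose (x : ℝ) (n : ℕ) :
    n.factorial * multichoose x n = ∏ j ∈ Finset.range n, (x + j) := by
  rw [← nsmul_eq_mul, Ring.factorial_nsmul_multichoose_eq_ascPochhammer,
    Polynomial.ascPochhammer_smeval_eq_eval]
  induction n with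
  | zero => simp
  | succ n ih => rw [ascPochhammer_succ_eval, ih, Finset.prod_range_succ]

lemma multichoose_pos (hx : 0 < x) (n : ℕ) : 0 < multichoose x n := by
  have h : 0 < (n.factorial : ℝ) * multichoose x n := by
    rw [factorial_mul_multichoose]
    exact Finset.prod_pos fun j _ ↦ by positivity
  exact pos_of_mul_pos_right h (by positivity)

lemma succ_mul_multichoose_succ (x : ℝ) (n : ℕ) :
    (n + 1) * multichoose x (n + 1) = (x + n) * multichoose x n := by
  have h := factorial_mul_multichoose x (n + 1)
  rw [Finset.prod_range_succ, ← factorial_mul_multichoose, Nat.factorial_succ] at h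
  have hn : (n.factorial : ℝ) ≠ 0 := by positivity
  apply mul_left_cancel₀ hn
  push_cast at h
  linear_combination h

lemma multichoose_neg_nonneg {α : ℝ} (hα₁ : 1 ≤ α) (hα₂ : α ≤ 2) {n : ℕ} (hn : 2 ≤ n) :
    0 ≤ multichoose (-α) n := by
  induction n, hn using Nat.le_induction with
  | base =>
    have h := factorial_mul_multichoose (-α) 2
    simp only [Finset.prod_range_succ, Finset.prod_range_zero, Nat.factorial] at h
    push_cast at h
    nlinarith
  | succ n hn ih =>
    have h := succ_mul_multichoose_succ (-α) n
    have hn' : (2 : ℝ) ≤ n := by exact_mod_cast hn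
    refine nonneg_of_mul_nonneg_right ?_ (by positivity : (0 : ℝ) < n + 1)
    rw [h]
    exact mul_nonneg (by linarith) ih

lemma sum_antidiagonal_multichoose_mul (x y : ℝ) (n : ℕ) :
    ∑ ij ∈ Finset.HasAntidiagonal.antidiagonal n, multichoose x ij.1 * multichoose y ij.2 =
      multichoose (x + y) n := by
  have h := Ring.add_choose_eq n (Commute.all (-x) (-y))
  rw [← neg_add, Ring.choose_neg'] at h
  have hterm : ∀ ij ∈ Finset.HasAntidiagonal.antidiagonal n,
      Ring.choose (-x) ij.1 * Ring.choose (-y) ij.2 =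
        (n : ℤ).negOnePow • (multichoose x ij.1 * multichoose y ij.2) := fun ij hij ↦ by
    rw [Ring.choose_neg', Ring.choose_neg', smul_mul_smul_comm, ← Int.negOnePow_add,
      ← Nat.cast_add, Finset.HasAntidiagonal.mem_antidiagonal.1 hij]
  rw [Finset.sum_congr rfl hterm, ← Finset.smul_sum] at h
  exact (smul_left_cancel _ h).symm

lemma sum_range_multichoose (x : ℝ) (n : ℕ) :
    ∑ i ∈ Finset.range (n + 1), multichoose x i = multichoose (x + 1) n := by
  induction n with
  | zero => simp
  | succ n ih => rw [Finset.sum_range_succ, ih, Ring.multichoose_succ_succ, add_comm]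

lemma hasSum_multichoose_mul_pow (x : ℝ) {z : ℝ} (hz : |z| < 1) :
    HasSum (fun n : ℕ ↦ multichoose x n * z ^ n) ((1 - z) ^ (-x)) := by
  have h := (one_div_one_sub_rpow_hasFPowerSeriesOnBall_zero x).hasSum (y := z)
    (by simpa [enorm_eq_nnnorm] using! hz)
  simp only [← Ring.multichoose_eq] at h
  rw [rpow_neg (by linarith [le_abs_self z])]
  simpa [mul_comm] using h

lemma multichoose_add_one_le (hx : 0 < x) {q : ℝ} (hq₀ : 0 < q) (hq₁ : q < 1) (n : ℕ) :
    multichoose (x + 1) n ≤ q ^ (-x) * ((1 - q) ^ n)⁻¹ := by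
  have hq : 0 < 1 - q := sub_pos.2 hq₁
  have hsum := hasSum_multichoose_mul_pow x (z := 1 - q) (by rw [abs_of_pos hq]; linarith)
  rw [sub_sub_cancel] at hsum
  rw [← sum_range_multichoose, ← div_eq_mul_inv, le_div_iff₀ (pow_pos hq n), Finset.sum_mul]
  calc ∑ i ∈ Finset.range (n + 1), multichoose x i * (1 - q) ^ n
      ≤ ∑ i ∈ Finset.range (n + 1), multichoose x i * (1 - q) ^ i := by
        refine Finset.sum_le_sum fun i hi ↦ mul_le_mul_of_nonneg_left ?_ (multichoose_pos hx i).le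
        exact pow_le_pow_of_le_one hq.le (by linarith) (Finset.mem_range_succ_iff.1 hi)
    _ ≤ q ^ (-x) := sum_le_hasSum _
        (fun i _ ↦ mul_nonneg (multichoose_pos hx i).le (pow_pos hq i).le) hsum

lemma tendsto_multichoose_mul_rpow {b : ℝ} (hb : 0 < b) :
    Tendsto (fun n : ℕ ↦ multichoose b n * (n : ℝ) ^ (1 - b)) atTop (𝓝 (Gamma b)⁻¹) := by
  have h₁ : Tendsto (fun n : ℕ ↦ (n : ℝ) / (n + b)) atTop (𝓝 1) :=
    tendsto_natCast_div_add_atTop b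
  have h₂ := h₁.div (GammaSeq_tendsto_Gamma b) (Gamma_pos_of_pos hb).ne'
  rw [one_div] at h₂
  refine h₂.congr' ?_
  filter_upwards [eventually_gt_atTop 0] with n hn
  have hn' : (0 : ℝ) < n := by exact_mod_cast hn
  have hpow : (n : ℝ) ^ b ≠ 0 := (rpow_pos_of_pos hn' _).ne'
  have hm := (multichoose_pos hb n).ne'
  rw [Pi.div_apply, GammaSeq, Finset.prod_range_succ, ← factorial_mul_multichoose,
    rpow_sub hn', rpow_one]
  field_simp
  ring

lemma tendsto_multichoose_mul_rpow_of_ratio {b t : ℝ} (hb : 0 < b) (ht : 0 < t) {n : ℕ → ℕ}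
    (hn : Tendsto (fun N : ℕ ↦ (n N : ℝ) / N) atTop (𝓝 t)) :
    Tendsto (fun N : ℕ ↦ multichoose b (n N) * (N : ℝ) ^ (1 - b)) atTop
      (𝓝 (t ^ (b - 1) / Gamma b)) := by
  have hn_atTop : Tendsto n atTop atTop := by
    rw [← tendsto_natCast_atTop_iff (R := ℝ)]
    refine (hn.pos_mul_atTop ht (tendsto_natCast_atTop_atTop (R := ℝ))).congr' ?_
    filter_upwards [eventually_ne_atTop 0] with N hN
    exact div_mul_cancel₀ _ (Nat.cast_ne_zero.2 hN)
  have h := ((tendsto_multichoose_mul_rpow hb).comp hn_atTop).mul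
    (hn.rpow_const (p := b - 1) (.inl ht.ne'))
  rw [inv_mul_eq_div] at h
  refine h.congr' ?_
  filter_upwards [eventually_gt_atTop 0, hn_atTop.eventually_gt_atTop 0] with N hN hnN
  have hN' : (0 : ℝ) < N := by exact_mod_cast hN
  have hnN' : (0 : ℝ) < n N := by exact_mod_cast hnN
  have hpow : (n N : ℝ) ^ (b - 1) ≠ 0 := (rpow_pos_of_pos hnN' _).ne'
  rw [Function.comp_apply, div_rpow hnN'.le hN'.le, ← neg_sub b 1, rpow_neg hnN'.le,
    rpow_neg hN'.le]
  field_simp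

end Multichoose

/-! ### Log-concavity of the resolvent coefficients -/

section LogConcave

variable {a w : ℕ → ℝ} {b c : ℝ}

lemma antitone_ratio_of_recurrence (ha : ∀ n, 0 < a n) (hw : ∀ n, 2 ≤ n → 0 ≤ w n) (hc : 0 < c)
    (hrec : ∀ m, c * a (m + 1) = b * a m - ∑ j ∈ Finset.range m, w (m + 1 - j) * a j) :
    Antitone fun n ↦ a (n + 1) / a n := by
  have hratio (m : ℕ) : c * (a (m + 1) / a m) =
      b - ∑ j ∈ Finset.range m, w (m + 1 - j) * (a j / a m) := by
    simp only [← mul_div_assoc, ← Finset.sum_div]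
    rw [hrec, sub_div, mul_div_cancel_right₀ _ (ha m).ne']
  suffices h : ∀ m, ∀ i ≤ m, a (m + 1) / a m ≤ a (i + 1) / a i from fun i m him ↦ h m i him
  intro m
  induction m with
  | zero => intro i hi; rw [Nat.le_zero.1 hi]
  | succ m ih =>
    have hstep : a (m + 2) / a (m + 1) ≤ a (m + 1) / a m := by
      refine le_of_mul_le_mul_left ?_ hc
      rw [hratio m, hratio (m + 1), Finset.sum_range_succ']
      have hfirst : 0 ≤ w (m + 2) * (a 0 / a (m + 1)) :=
        mul_nonneg (hw _ (by omega)) (div_nonneg (ha _).le (ha _).le)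
      have hrest : ∑ j ∈ Finset.range m, w (m + 1 - j) * (a j / a m) ≤
          ∑ j ∈ Finset.range m, w (m + 2 - (j + 1)) * (a (j + 1) / a (m + 1)) := by
        refine Finset.sum_le_sum fun j hj ↦ ?_
        have hjm := Finset.mem_range.1 hj
        rw [show m + 2 - (j + 1) = m + 1 - j by omega]
        refine mul_le_mul_of_nonneg_left ?_ (hw _ (by omega))
        have h := ih j hjm.le
        rw [div_le_div_iff₀ (ha _) (ha _)] at h ⊢
        linarith
      simp only [Nat.sub_zero]
      linarith
    intro i hi
    rcases Nat.le_succ_iff.1 hi with hi | rfl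
    · exact hstep.trans (ih i hi)
    · rfl

lemma mul_add_le_add_mul_of_antitone_ratio (ha : ∀ n, 0 < a n)
    (h : Antitone fun n ↦ a (n + 1) / a n) {i m : ℕ} (him : i ≤ m) (d : ℕ) :
    a i * a (m + d) ≤ a (i + d) * a m := by
  induction d with
  | zero => simp
  | succ d ih =>
    have hr : a (m + d + 1) / a (m + d) ≤ a (i + d + 1) / a (i + d) := h (by omega)
    calc a i * a (m + (d + 1))
        = a i * a (m + d) * (a (m + d + 1) / a (m + d)) := by
          have := (ha (m + d)).ne'
          field_simp
          ring_nf
      _ ≤ a (i + d) * a m * (a (i + d + 1) / a (i + d)) :=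
          mul_le_mul ih hr (div_nonneg (ha _).le (ha _).le) (mul_nonneg (ha _).le (ha _).le)
      _ = a (i + (d + 1)) * a m := by
          have := (ha (i + d)).ne'
          field_simp
          ring_nf

end LogConcave

/-- The `n`-th Taylor coefficient at `0` of `((1 - z) ^ α - c)⁻¹ = ∑ c ^ k (1 - z) ^ (-α (k + 1))`.
It is the discrete counterpart of `mlKernel α α`, whose Laplace transform is `(s ^ α - λ)⁻¹`. -/
noncomputable def resolventCoeff (α c : ℝ) (n : ℕ) : ℝ :=
  ∑' k : ℕ, c ^ k * multichoose (α * (k + 1)) n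

section ResolventCoeff

variable {α c : ℝ}

lemma abs_pow_mul_multichoose_le (hα : 1 < α) (c : ℝ) {q : ℝ} (hq₀ : 0 < q) (hq₁ : q < 1)
    (k n : ℕ) : |c ^ k * multichoose (α * (k + 1)) n| ≤
      q ^ (1 - α) * ((1 - q) ^ n)⁻¹ * (|c| / q ^ α) ^ k := by
  have hp : 0 < α * k + (α - 1) := add_pos_of_nonneg_of_pos (by positivity) (sub_pos.2 hα)
  have hle := multichoose_add_one_le hp hq₀ hq₁ n
  rw [show α * k + (α - 1) + 1 = α * (k + 1) by ring] at hle
  have hpow : q ^ (-(α * k + (α - 1))) = q ^ (1 - α) / (q ^ α) ^ k := by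
    rw [← rpow_mul_natCast hq₀.le, ← rpow_sub hq₀]
    ring_nf
  rw [abs_mul, abs_pow, abs_of_pos (multichoose_pos (by positivity) n)]
  calc |c| ^ k * multichoose (α * (k + 1)) n
      ≤ |c| ^ k * (q ^ (1 - α) / (q ^ α) ^ k * ((1 - q) ^ n)⁻¹) := by rw [← hpow]; gcongr
    _ = q ^ (1 - α) * ((1 - q) ^ n)⁻¹ * (|c| / q ^ α) ^ k := by rw [div_pow]; ring

lemma summable_pow_mul_multichoose (hα : 1 < α) (hc : |c| < 1) (n : ℕ) :
    Summable fun k : ℕ ↦ c ^ k * multichoose (α * (k + 1)) n := by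
  obtain ⟨r, hcr, hr₁⟩ := exists_between hc
  have hr₀ : 0 < r := (abs_nonneg c).trans_lt hcr
  have hα₀ : 0 < α := by linarith
  have hq₀ : 0 < r ^ α⁻¹ := rpow_pos_of_pos hr₀ _
  have hq₁ : r ^ α⁻¹ < 1 := rpow_lt_one hr₀.le hr₁ (inv_pos.2 hα₀)
  have hqα : (r ^ α⁻¹) ^ α = r := rpow_inv_rpow hr₀.le hα₀.ne'
  refine .of_norm_bounded ?_ fun k ↦ abs_pow_mul_multichoose_le hα c hq₀ hq₁ k n
  rw [hqα]
  exact (summable_geometric_of_lt_one (by positivity) ((div_lt_one hr₀).2 hcr)).mul_left _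

lemma resolventCoeff_pos (hα : 1 < α) (hc₀ : 0 ≤ c) (hc₁ : c < 1) (n : ℕ) :
    0 < resolventCoeff α c n := by
  have hα₀ : 0 < α := by linarith
  have hm (k : ℕ) : 0 < multichoose (α * (k + 1)) n :=
    multichoose_pos (mul_pos hα₀ k.cast_add_one_pos) n
  exact (summable_pow_mul_multichoose hα (by rwa [abs_of_nonneg hc₀]) n).tsum_pos
    (fun k ↦ mul_nonneg (pow_nonneg hc₀ k) (hm k).le) 0 (by simpa using hm 0)

lemma sum_antidiagonal_multichoose_mul_resolventCoeff (hα : 1 < α) (hc : |c| < 1) {n : ℕ}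
    (hn : n ≠ 0) :
    ∑ ij ∈ Finset.HasAntidiagonal.antidiagonal n,
      multichoose (-α) ij.1 * resolventCoeff α c ij.2 = c * resolventCoeff α c n := by
  have hs (m : ℕ) := (summable_pow_mul_multichoose hα hc m).hasSum
  have hvand (k : ℕ) : ∑ ij ∈ Finset.HasAntidiagonal.antidiagonal n,
      multichoose (-α) ij.1 * (c ^ k * multichoose (α * (k + 1)) ij.2) =
        c ^ k * multichoose (α * k) n := by
    rw [show α * k = -α + α * (k + 1) by ring, ← sum_antidiagonal_multichoose_mul, Finset.mul_sum]
    exact Finset.sum_congr rfl fun ij _ ↦ by ring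
  have hsum := hasSum_sum (s := Finset.HasAntidiagonal.antidiagonal n)
    fun ij _ ↦ (hs ij.2).mul_left (multichoose (-α) ij.1)
  simp only [hvand] at hsum
  have hzero : multichoose (0 : ℝ) n = 0 := by
    obtain ⟨m, rfl⟩ := Nat.exists_eq_succ_of_ne_zero hn
    exact Ring.multichoose_zero_succ m
  have hshift := (hasSum_nat_add_iff' 1).2 hsum
  simp only [Finset.sum_range_one, Nat.cast_zero, mul_zero, hzero, sub_zero, pow_succ',
    mul_assoc, Nat.cast_add, Nat.cast_one] at hshift
  exact hshift.unique ((hs n).mul_left c)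

lemma resolventCoeff_recurrence (hα : 1 < α) (hc : |c| < 1) (m : ℕ) :
    (1 - c) * resolventCoeff α c (m + 1) = α * resolventCoeff α c m -
      ∑ j ∈ Finset.range m, multichoose (-α) (m + 1 - j) * resolventCoeff α c j := by
  have h := sum_antidiagonal_multichoose_mul_resolventCoeff hα hc m.succ_ne_zero
  rw [← Finset.Nat.sum_antidiagonal_swap, Finset.Nat.sum_antidiagonal_eq_sum_range_succ_mk] at h
  simp only [Prod.swap_prod_mk, Finset.sum_range_succ] at h
  simp only [Nat.succ_eq_add_one, add_tsub_cancel_left, Ring.multichoose_one_right', pow_one,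
    neg_mul, tsub_self, Ring.multichoose_zero_right', pow_zero, one_mul] at h
  linarith

lemma resolventCoeff_mul_le (hα₁ : 1 < α) (hα₂ : α ≤ 2) (hc₀ : 0 ≤ c) (hc₁ : c < 1) {i m : ℕ}
    (him : i ≤ m) (d : ℕ) :
    resolventCoeff α c i * resolventCoeff α c (m + d) ≤
      resolventCoeff α c (i + d) * resolventCoeff α c m := by
  have hpos := resolventCoeff_pos hα₁ hc₀ hc₁
  exact mul_add_le_add_mul_of_antitone_ratio hpos
    (antitone_ratio_of_recurrence hpos (fun n hn ↦ multichoose_neg_nonneg hα₁.le hα₂ hn)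
      (sub_pos.2 hc₁) (resolventCoeff_recurrence hα₁ (by rwa [abs_of_nonneg hc₀]))) him d

end ResolventCoeff

/-! ### Scaling limit and the case `λ ≥ 0` -/

section ScalingLimit

variable {α lam t : ℝ} {n : ℕ → ℕ}

lemma tendsto_one_add_div_pow_of_ratio (M : ℝ)
    (hn : Tendsto (fun N : ℕ ↦ (n N : ℝ) / N) atTop (𝓝 t)) :
    Tendsto (fun N : ℕ ↦ (1 + M / N) ^ n N) atTop (𝓝 (exp (M * t))) := by
  rw [exp_mul]
  refine ((tendsto_one_add_div_pow_exp M).rpow hn (.inl (exp_pos M).ne')).congr' ?_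
  have hbase : ∀ᶠ N : ℕ in atTop, 0 < 1 + M / N := by
    have h := (tendsto_const_div_atTop_nhds_zero_nat M).const_add 1
    rw [add_zero] at h
    exact h.eventually_const_lt zero_lt_one
  filter_upwards [hbase, eventually_ne_atTop 0] with N hN hN₀
  rw [← rpow_natCast, ← rpow_mul hN.le, mul_div_cancel₀ _ (Nat.cast_ne_zero.2 hN₀), rpow_natCast]

lemma rpow_mul_resolvent_term {N : ℝ} (hN : 0 < N) (α lam : ℝ) (k m : ℕ) :
    N ^ (1 - α) * ((lam / N ^ α) ^ k * multichoose (α * (k + 1)) m) =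
      lam ^ k * (multichoose (α * (k + 1)) m * N ^ (1 - α * (k + 1))) := by
  have hpow : N ^ (1 - α * (k + 1)) = N ^ (1 - α) / (N ^ α) ^ k := by
    rw [← rpow_mul_natCast hN.le, ← rpow_sub hN]
    ring_nf
  rw [hpow, div_pow]
  ring

lemma abs_rpow_mul_resolvent_term_le (hα : 1 < α) {M N : ℝ} (hM : 0 < M) (hMN : M < N) (lam : ℝ)
    (k m : ℕ) :
    |N ^ (1 - α) * ((lam / N ^ α) ^ k * multichoose (α * (k + 1)) m)| ≤
      M ^ (1 - α) * ((1 - M / N) ^ m)⁻¹ * (|lam| / M ^ α) ^ k := by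
  have hN : 0 < N := hM.trans hMN
  have hle := abs_pow_mul_multichoose_le hα (lam / N ^ α) (div_pos hM hN) ((div_lt_one hN).2 hMN)
    k m
  have hratio : |lam / N ^ α| / (M / N) ^ α = |lam| / M ^ α := by
    rw [abs_div, abs_of_pos (rpow_pos_of_pos hN α), div_rpow hM.le hN.le,
      div_div_div_cancel_right₀ (rpow_pos_of_pos hN α).ne']
  rw [abs_mul, abs_of_pos (rpow_pos_of_pos hN _)]
  calc N ^ (1 - α) * |(lam / N ^ α) ^ k * multichoose (α * (k + 1)) m|
      ≤ N ^ (1 - α) * ((M / N) ^ (1 - α) * ((1 - M / N) ^ m)⁻¹ * (|lam| / M ^ α) ^ k) := by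
        rw [← hratio]
        gcongr
    _ = M ^ (1 - α) * ((1 - M / N) ^ m)⁻¹ * (|lam| / M ^ α) ^ k := by
        rw [div_rpow hM.le hN.le]
        have := (rpow_pos_of_pos hN (1 - α)).ne'
        field_simp

lemma mlKernel_self_eq_tsum (ht : 0 < t) (α lam : ℝ) : mlKernel α α lam t =
    ∑' k : ℕ, lam ^ k * (t ^ (α * (k + 1) - 1) / Gamma (α * (k + 1))) := by
  rw [mlKernel, ML, ← tsum_mul_left]
  refine tsum_congr fun k ↦ ?_
  have hpow : t ^ (α * (k + 1) - 1) = t ^ (α - 1) * (t ^ α) ^ k := by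
    rw [← rpow_mul_natCast ht.le, ← rpow_add ht]
    ring_nf
  rw [hpow, mul_pow, mul_add_one]
  ring

lemma tendsto_rpow_mul_resolventCoeff (hα : 1 < α) (lam : ℝ) (ht : 0 < t)
    (hn : Tendsto (fun N : ℕ ↦ (n N : ℝ) / N) atTop (𝓝 t)) :
    Tendsto (fun N : ℕ ↦ (N : ℝ) ^ (1 - α) * resolventCoeff α (lam / (N : ℝ) ^ α) (n N)) atTop
      (𝓝 (mlKernel α α lam t)) := by
  obtain ⟨M, hM, hlamM⟩ : ∃ M : ℝ, 0 < M ∧ |lam| < M ^ α :=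
    ((eventually_gt_atTop 0).and
      ((tendsto_rpow_atTop (by linarith)).eventually_gt_atTop |lam|)).exists
  have hsum : Summable fun k : ℕ ↦
      M ^ (1 - α) * ((exp (-M * t))⁻¹ * 2) * (|lam| / M ^ α) ^ k :=
    (summable_geometric_of_lt_one (by positivity)
      ((div_lt_one (rpow_pos_of_pos hM α)).2 hlamM)).mul_left _
  simp only [resolventCoeff, ← tsum_mul_left]
  rw [mlKernel_self_eq_tsum ht]
  refine tendsto_tsum_of_dominated_convergence hsum (fun k ↦ ?_) ?_
  · refine ((tendsto_multichoose_mul_rpow_of_ratio (b := α * (k + 1)) (by positivity) ht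
      hn).const_mul (lam ^ k)).congr' ?_
    filter_upwards [eventually_gt_atTop 0] with N hN
    exact (rpow_mul_resolvent_term (Nat.cast_pos.2 hN) α lam k (n N)).symm
  · have hexp := (tendsto_one_add_div_pow_of_ratio (-M) hn).inv₀ (exp_pos _).ne'
    filter_upwards [hexp.eventually_le_const (lt_mul_of_one_lt_right (by positivity) one_lt_two),
      tendsto_natCast_atTop_atTop.eventually_gt_atTop M] with N hN hMN k
    refine (abs_rpow_mul_resolvent_term_le hα hM hMN lam k (n N)).trans ?_
    rw [neg_div, ← sub_eq_add_neg] at hN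
    gcongr

end ScalingLimit

section Nonneg

variable {α lam x y d : ℝ}

lemma mlKernel_mul_add_le (hα₁ : 1 < α) (hα₂ : α ≤ 2) (hlam : 0 ≤ lam) (hy : 0 < y) (hyx : y ≤ x)
    (hd : 0 ≤ d) :
    mlKernel α α lam y * mlKernel α α lam (x + d) ≤
      mlKernel α α lam (y + d) * mlKernel α α lam x := by
  have hx : 0 < x := hy.trans_le hyx
  have hfloor {z : ℝ} (hz : 0 ≤ z) :
      Tendsto (fun N : ℕ ↦ (⌊z * N⌋₊ : ℝ) / N) atTop (𝓝 z) :=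
    (tendsto_nat_floor_mul_div_atTop hz).comp tendsto_natCast_atTop_atTop
  have hfloor_add {z : ℝ} (hz : 0 ≤ z) :
      Tendsto (fun N : ℕ ↦ ((⌊z * N⌋₊ + ⌊d * N⌋₊ : ℕ) : ℝ) / N) atTop (𝓝 (z + d)) := by
    simpa only [Nat.cast_add, add_div] using (hfloor hz).add (hfloor hd)
  have hlim {z : ℝ} (hz : 0 < z) := tendsto_rpow_mul_resolventCoeff hα₁ lam hz (hfloor hz.le)
  have hlim_add {z : ℝ} (hz : 0 < z) :=
    tendsto_rpow_mul_resolventCoeff hα₁ lam (by linarith : 0 < z + d) (hfloor_add hz.le)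
  refine le_of_tendsto_of_tendsto ((hlim hy).mul (hlim_add hx)) ((hlim_add hy).mul (hlim hx)) ?_
  filter_upwards [eventually_gt_atTop 0, ((tendsto_rpow_atTop (by linarith : 0 < α)).comp
    tendsto_natCast_atTop_atTop).eventually_gt_atTop lam] with N hN hlamN
  have hNα : 0 < (N : ℝ) ^ α := rpow_pos_of_pos (Nat.cast_pos.2 hN) α
  have hle := resolventCoeff_mul_le hα₁ hα₂ (div_nonneg hlam hNα.le) ((div_lt_one hNα).2 hlamN)
    (Nat.floor_le_floor (mul_le_mul_of_nonneg_right hyx N.cast_nonneg)) ⌊d * N⌋₊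
  linarith [mul_le_mul_of_nonneg_left hle (mul_self_nonneg ((N : ℝ) ^ (1 - α)))]

lemma mlKernel_mul_sub_one_le (hα₁ : 1 < α) (hα₂ : α ≤ 2) (hlam : 0 ≤ lam) (hy : 0 < y)
    (hyx : y ≤ x) :
    mlKernel α α lam y * mlKernel α (α - 1) lam x ≤
      mlKernel α (α - 1) lam y * mlKernel α α lam x := by
  have hderiv {z : ℝ} (hz : 0 < z) :=
    (hasDerivAt_mlKernel (lam := lam) (by linarith : 0 < α) hα₁ hz).tendsto_slope_zero_right
  refine le_of_tendsto_of_tendsto ((hderiv (hy.trans_le hyx)).const_mul (mlKernel α α lam y))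
    ((hderiv hy).mul_const (mlKernel α α lam x)) ?_
  filter_upwards [self_mem_nhdsWithin] with d hd
  have hd₀ : 0 < d := hd
  have hle := mul_le_mul_of_nonneg_left (mlKernel_mul_add_le hα₁ hα₂ hlam hy hyx hd₀.le)
    (inv_pos.2 hd₀).le
  simp only [smul_eq_mul]
  linarith

lemma exists_mlKernel_sub_one_ne_mul (hα : 1 < α) (hlam : 0 ≤ lam) (c : ℝ) :
    ∃ t > 0, mlKernel α (α - 1) lam t ≠ c * mlKernel α α lam t := by
  by_contra! h
  have hα₀ : 0 < α := by linarith
  have he {t : ℝ} (ht : 0 < t) : 0 < mlKernel α α lam t :=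
    mlKernel_pos_of_nonneg hα₀ hα₀ hlam ht
  have hf {t : ℝ} (ht : 0 < t) : 0 < mlKernel α (α - 1) lam t :=
    mlKernel_pos_of_nonneg hα₀ (sub_pos.2 hα) hlam ht
  have hc : 0 < c := pos_of_mul_pos_left (h 1 one_pos ▸ hf one_pos) (he one_pos).le
  have hmono : StrictMonoOn (mlKernel α α lam) (Ici 0) := by
    refine strictMonoOn_of_deriv_pos (convex_Ici 0) (continuous_mlKernel hα₀ hα).continuousOn
      fun t ht ↦ ?_
    rw [interior_Ici] at ht
    rw [(hasDerivAt_mlKernel hα₀ hα ht).deriv]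
    exact hf ht
  -- The mean value theorem on `[0, 1 / c]` gives `e ξ = e (1 / c)` with `ξ < 1 / c`.
  obtain ⟨ξ, hξ, hslope⟩ := exists_hasDerivAt_eq_slope (mlKernel α α lam)
    (mlKernel α (α - 1) lam) (inv_pos.2 hc) (continuous_mlKernel hα₀ hα).continuousOn
    fun t ht ↦ hasDerivAt_mlKernel hα₀ hα ht.1
  rw [h ξ hξ.1, mlKernel_zero_right hα, sub_zero, sub_zero, div_inv_eq_mul, mul_comm] at hslope
  exact (hmono hξ.1.le (inv_pos.2 hc).le hξ.2).ne (mul_right_cancel₀ hc.ne' hslope)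

lemma mlKernel_mul_sub_one_lt (hα₁ : 1 < α) (hα₂ : α ≤ 2) (hlam : 0 ≤ lam) (hy : 0 < y)
    (hyx : y < x) :
    mlKernel α α lam y * mlKernel α (α - 1) lam x <
      mlKernel α (α - 1) lam y * mlKernel α α lam x := by
  have hα₀ : 0 < α := by linarith
  have he {t : ℝ} (ht : 0 < t) : 0 < mlKernel α α lam t :=
    mlKernel_pos_of_nonneg hα₀ hα₀ hlam ht
  refine (mlKernel_mul_sub_one_le hα₁ hα₂ hlam hy hyx.le).lt_of_ne fun heq ↦ ?_
  have hx : 0 < x := hy.trans hyx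
  set c := mlKernel α (α - 1) lam x / mlKernel α α lam x
  have hfx : mlKernel α (α - 1) lam x = c * mlKernel α α lam x :=
    (div_mul_cancel₀ _ (he hx).ne').symm
  have hfy : mlKernel α (α - 1) lam y = c * mlKernel α α lam y := by
    refine mul_right_cancel₀ (he hx).ne' ?_
    rw [← heq, hfx]
    ring
  have hIoo : EqOn (mlKernel α (α - 1) lam) (fun t ↦ c * mlKernel α α lam t) (Ioo y x) := by
    intro t ht
    have ht₀ : 0 < t := hy.trans ht.1
    have hyt := mlKernel_mul_sub_one_le hα₁ hα₂ hlam hy ht.1.le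
    have htx := mlKernel_mul_sub_one_le hα₁ hα₂ hlam ht₀ ht.2.le
    rw [hfy] at hyt
    rw [hfx] at htx
    refine le_antisymm (le_of_mul_le_mul_left ?_ (he hy)) (le_of_mul_le_mul_right ?_ (he hx))
      <;> linarith
  obtain ⟨z, hz⟩ := nonempty_Ioo.2 hyx
  obtain ⟨t, ht, hne⟩ := exists_mlKernel_sub_one_ne_mul hα₁ hlam c
  refine hne (AnalyticOnNhd.eqOn_of_preconnected_of_eventuallyEq
    (fun u hu ↦ analyticAt_mlKernel hα₀ (sub_pos.2 hα₁) hu)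
    (fun u hu ↦ analyticAt_const.mul (analyticAt_mlKernel hα₀ hα₀ hu)) isPreconnected_Ioi
    (hy.trans hz.1) ?_ ht)
  filter_upwards [isOpen_Ioo.mem_nhds hz] with u hu using hIoo hu

lemma mlKernel_sub_mul_lt_of_nonneg {s t : ℝ} (hα₁ : 1 < α) (hα₂ : α ≤ 2) (hlam : 0 ≤ lam)
    (hs : 0 < s) (hst : s ≤ t) (ht : t < 1) :
    mlKernel α α lam (t - s) * mlKernel α (α - 1) lam 1 <
      mlKernel α α lam t * mlKernel α (α - 1) lam (1 - s) := by
  have hα₀ : 0 < α := by linarith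
  have he {t : ℝ} (ht : 0 < t) : 0 < mlKernel α α lam t :=
    mlKernel_pos_of_nonneg hα₀ hα₀ hlam ht
  have hf {t : ℝ} (ht : 0 < t) : 0 < mlKernel α (α - 1) lam t :=
    mlKernel_pos_of_nonneg hα₀ (sub_pos.2 hα₁) hlam ht
  have hs₁ : 0 < 1 - s := by linarith
  obtain rfl | hst := hst.eq_or_lt
  · rw [sub_self, mlKernel_zero_right hα₁, zero_mul]
    exact mul_pos (he hs) (hf hs₁)
  have hconc := mlKernel_mul_add_le hα₁ hα₂ hlam (sub_pos.2 hst) (by linarith : t - s ≤ 1 - s) hs.le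
  rw [sub_add_cancel, sub_add_cancel] at hconc
  have hratio := mlKernel_mul_sub_one_lt hα₁ hα₂ hlam hs₁ (by linarith : 1 - s < 1)
  refine lt_of_mul_lt_mul_right ?_ (he one_pos).le
  calc mlKernel α α lam (t - s) * mlKernel α (α - 1) lam 1 * mlKernel α α lam 1
      = mlKernel α α lam (t - s) * mlKernel α α lam 1 * mlKernel α (α - 1) lam 1 := by ring
    _ ≤ mlKernel α α lam t * mlKernel α α lam (1 - s) * mlKernel α (α - 1) lam 1 :=
        mul_le_mul_of_nonneg_right hconc (hf one_pos).le
    _ = mlKernel α α lam t * (mlKernel α α lam (1 - s) * mlKernel α (α - 1) lam 1) := by ring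
    _ < mlKernel α α lam t * (mlKernel α (α - 1) lam (1 - s) * mlKernel α α lam 1) :=
        mul_lt_mul_of_pos_left hratio (he (by linarith))
    _ = mlKernel α α lam t * mlKernel α (α - 1) lam (1 - s) * mlKernel α α lam 1 := by ring

end Nonneg

/-! ### Sign of the Green's function -/

section Zeros

variable {α β x : ℝ}

lemma neg_of_ML_eq_zero (hα : 0 < α) (hβ : 0 < β) (h : ML α β x = 0) : x < 0 := by
  contrapose! h
  exact (ML_pos_of_nonneg hα hβ h).ne'

lemma ML_pos_of_isGreatest_lt {x₀ : ℝ} (hα : 0 < α) (hβ : 0 < β)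
    (hx₀ : IsGreatest {y | ML α β y = 0} x₀) (hx : x₀ < x) : 0 < ML α β x := by
  by_contra! hneg
  obtain hx_nonneg | hx_neg := le_or_gt 0 x
  · exact hneg.not_gt (ML_pos_of_nonneg hα hβ hx_nonneg)
  obtain ⟨y, hy, hy_zero⟩ := intermediate_value_Icc hx_neg.le (continuous_ML hα hβ).continuousOn
    ⟨hneg, (ML_pos_of_nonneg hα hβ le_rfl).le⟩
  exact (hx.trans_le hy.1).not_ge (hx₀.2 hy_zero)

end Zeros

section Green

variable {α lam t s : ℝ}

lemma greenG_eq (hs : s < 1) : greenG α lam t s =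
    mlKernel α α lam t * mlKernel α (α - 1) lam (1 - s) / mlKernel α (α - 1) lam 1 -
      if s ≤ t then mlKernel α α lam (t - s) else 0 := by
  have hpow : (1 - s) ^ (α - 1 - 1) = ((1 - s) ^ (2 - α))⁻¹ := by
    rw [← rpow_neg (sub_pos.2 hs).le]
    ring_nf
  have hquot : t ^ (α - 1) * ML α α (lam * t ^ α) * ML α (α - 1) (lam * (1 - s) ^ α) /
      ((1 - s) ^ (2 - α) * ML α (α - 1) lam) =
        mlKernel α α lam t * mlKernel α (α - 1) lam (1 - s) / mlKernel α (α - 1) lam 1 := by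
    rw [mlKernel_one, mlKernel, mlKernel, hpow]
    ring
  rw [greenG, hquot]
  split_ifs
  · rfl
  · rw [sub_zero]

lemma mlKernel_sub_one_pos (hα : 1 < α) (h : ∀ y, lam ≤ y → 0 < ML α (α - 1) y) (ht₀ : 0 < t)
    (ht₁ : t ≤ 1) : 0 < mlKernel α (α - 1) lam t := by
  have hα₀ : 0 < α := by linarith
  obtain hlam | hlam := le_total lam 0
  · exact mlKernel_pos ht₀ (h _ (mul_rpow_mem_Icc hα₀.le hlam ⟨ht₀.le, ht₁⟩).1)
  · exact mlKernel_pos_of_nonneg hα₀ (sub_pos.2 hα) hlam ht₀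

lemma mlKernel_sub_mul_lt (hα₁ : 1 < α) (hα₂ : α ≤ 2) (h : ∀ y, lam ≤ y → 0 < ML α (α - 1) y)
    (hs : 0 < s) (hst : s ≤ t) (ht : t < 1) :
    mlKernel α α lam (t - s) * mlKernel α (α - 1) lam 1 <
      mlKernel α α lam t * mlKernel α (α - 1) lam (1 - s) := by
  obtain hlam | hlam := le_total lam 0
  · exact mlKernel_sub_mul_lt_of_nonpos hα₁ hα₂ hlam (fun y hy ↦ h y hy.1) hs hst ht
  · exact mlKernel_sub_mul_lt_of_nonneg hα₁ hα₂ hlam hs hst ht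

lemma greenG_pos (hα₁ : 1 < α) (hα₂ : α ≤ 2) (h : ∀ y, lam ≤ y → 0 < ML α (α - 1) y)
    (ht : t ∈ Ioo 0 1) (hs : s ∈ Ioo 0 1) : 0 < greenG α lam t s := by
  have hf {u : ℝ} (hu₀ : 0 < u) (hu₁ : u ≤ 1) : 0 < mlKernel α (α - 1) lam u :=
    mlKernel_sub_one_pos hα₁ h hu₀ hu₁
  have hf₁ := hf one_pos le_rfl
  have hfs := hf (sub_pos.2 hs.2) (sub_le_self 1 hs.1.le)
  rw [greenG_eq hs.2]
  split_ifs with hst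
  · rw [sub_pos, lt_div_iff₀ hf₁]
    exact mlKernel_sub_mul_lt hα₁ hα₂ h hs.1 hst ht.2
  · have hdiag := mlKernel_sub_mul_lt hα₁ hα₂ h ht.1 le_rfl ht.2
    rw [sub_self, mlKernel_zero_right hα₁, zero_mul] at hdiag
    have he : 0 < mlKernel α α lam t :=
      pos_of_mul_pos_left hdiag (hf (sub_pos.2 ht.2) (sub_le_self 1 ht.1.le)).le
    rw [sub_zero]
    positivity

lemma greenG_eq_zero_of_lt (hts : t < s) (h : ML α (α - 1) (lam * (1 - s) ^ α) = 0) :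
    greenG α lam t s = 0 := by
  rw [greenG, if_neg hts.not_ge, h, mul_zero, zero_div]

lemma exists_mul_one_sub_rpow_eq (hα : 0 < α) {μ : ℝ} (hlam : lam < μ) (hμ : μ < 0) :
    ∃ s ∈ Ioo (0 : ℝ) 1, lam * (1 - s) ^ α = μ := by
  have hlam₀ : lam < 0 := hlam.trans hμ
  have hq₀ : 0 < μ / lam := div_pos_of_neg_of_neg hμ hlam₀
  have hr₀ : 0 < (μ / lam) ^ α⁻¹ := rpow_pos_of_pos hq₀ _
  have hr₁ : (μ / lam) ^ α⁻¹ < 1 :=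
    rpow_lt_one hq₀.le ((div_lt_one_of_neg hlam₀).2 hlam) (inv_pos.2 hα)
  refine ⟨1 - (μ / lam) ^ α⁻¹, ⟨sub_pos.2 hr₁, sub_lt_self 1 hr₀⟩, ?_⟩
  rw [sub_sub_cancel, rpow_inv_rpow hq₀.le hα.ne', mul_div_cancel₀ _ hlam₀.ne]

lemma exists_greenG_eq_zero (hα : 1 < α) {μ : ℝ} (hμ : ML α (α - 1) μ = 0) (hlam : lam < μ) :
    ∃ t ∈ Ioo (0 : ℝ) 1, ∃ s ∈ Ioo (0 : ℝ) 1, greenG α lam t s = 0 := by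
  have hα₀ : 0 < α := by linarith
  obtain ⟨s, hs, hsμ⟩ :=
    exists_mul_one_sub_rpow_eq hα₀ hlam (neg_of_ML_eq_zero hα₀ (sub_pos.2 hα) hμ)
  obtain ⟨t, ht₀, hts⟩ := exists_between hs.1
  exact ⟨t, ⟨ht₀, hts.trans hs.2⟩, s, hs, greenG_eq_zero_of_lt hts (hsμ ▸ hμ)⟩

end Green

end MittagLeffler

/-- With `λ₁*` the largest real zero of `E_{α,α-1}` and `E_{α,α-1}(λ) ≠ 0`, the Green's
function satisfies `G(t,s) > 0` for all `t,s ∈ (0,1)` if and only if `λ > λ₁*`. -/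
theorem stmt7 (α lam lam1 : ℝ) (hα1 : 1 < α) (hα2 : α ≤ 2)
    (hlam1 : IsGreatest {μ : ℝ | ML α (α - 1) μ = 0} lam1)
    (hML : ML α (α - 1) lam ≠ 0) :
    (∀ t ∈ Set.Ioo (0:ℝ) 1, ∀ s ∈ Set.Ioo (0:ℝ) 1, 0 < greenG α lam t s) ↔
      lam1 < lam := by
  constructor
  · intro hG
    by_contra! hle
    have hlt : lam < lam1 := hle.lt_of_ne fun heq ↦ hML (heq ▸ hlam1.1)
    obtain ⟨t, ht, s, hs, hzero⟩ := MittagLeffler.exists_greenG_eq_zero hα1 hlam1.1 hlt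
    exact (hG t ht s hs).ne' hzero
  · intro hlt t ht s hs
    have hpos (y : ℝ) (hy : lam ≤ y) : 0 < ML α (α - 1) y :=
      MittagLeffler.ML_pos_of_isGreatest_lt (zero_lt_one.trans hα1) (sub_pos.2 hα1) hlam1
        (hlt.trans_le hy)
    exact MittagLeffler.greenG_pos hα1 hα2 hpos ht hs
end

section
/- Let 1<α≤2, λ₁* the largest real zero of E_{α,α−1}(λ)=0, λ>λ₁*, and G the associated Green's function. Then there exist a constant M>0 and a continuous function m:I→ℝ with m(0)=0 and m(t)>0 for all t∈(0,1], such that m(t) ≤ t^{2−α} G(t,s)/(s (1−s)^{α−2}) ≤ M for all t,s∈(0,1). -/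
/-!
Write `F_β(t) = t^{β-1} E_{α,β}(λ t^α)`, so that `F_β' = F_{β-1}` and fractional integration of
order `γ` maps `F_β` to `F_{β+γ}`. Since `λ > λ₁*`, both `F_{α-1}` and `F_α` are positive on
`(0, 1]`, and the heart of the argument is that `F_α` is strictly log-concave there, i.e. that the
Turán determinant `E_{α,α-2} E_{α,α} - E_{α,α-1}²` is negative. It is negative at `0`. At a first
zero `T`, the function `f = F_{α-1} - q F_α` with `q = F_{α-1}(T) / F_α(T)` touches zero from above
to second order, which is incompatible with the behaviour at `T` of the fractional integral
of `f` of order `2 - α`. For `α = 2` the determinant is constant.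

Log-concavity gives `F_α(t-s) F_α(1) ≤ F_α(t) F_α(1-s)`, which bounds the weighted Green's function
below by `t E_{α,α}(λ t^α) r(1-s) / s` with
`r(x) = E_{α,α-1}(λ x^α) / E_{α,α-1}(λ) - x E_{α,α}(λ x^α) / E_{α,α}(λ)`. The strict decrease of
`F_{α-1} / F_α` makes `r` positive on `[0, 1)` with a simple zero at `1`, so `r(1-s) / s` is bounded
below. The upper bound is a Lipschitz estimate at `s = 0`, using `t - s ≤ t (1 - s)` and `α ≤ 2`.
-/

open Filter Topology MeasureTheory

/-! ### Real analysis -/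

/-- The second forward difference of `g` at `a` with step `h`; it measures convexity at `a` without
asking `g` to be differentiable. -/
noncomputable def secondDiff (g : ℝ → ℝ) (a h : ℝ) : ℝ := g (a + 2 * h) - 2 * g (a + h) + g a

theorem taylor_two_isLittleO {φ φ' : ℝ → ℝ} {a m : ℝ}
    (hφ : ∀ᶠ x in 𝓝 a, HasDerivAt φ (φ' x) x) (hφ' : HasDerivAt φ' m a) :
    (fun x => φ x - φ a - φ' a * (x - a) - m / 2 * (x - a) ^ 2) =o[𝓝 a]
      fun x => (x - a) ^ 2 := by
  set R : ℝ → ℝ := fun x => φ x - φ a - φ' a * (x - a) - m / 2 * (x - a) ^ 2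
  have hR : ∀ᶠ x in 𝓝 a, HasDerivAt R (φ' x - φ' a - m * (x - a)) x := by
    filter_upwards [hφ] with x hx
    have hlin := (hasDerivAt_id x).sub_const a
    exact (((hx.sub_const _).sub (hlin.const_mul (φ' a))).sub
      ((hlin.pow 2).const_mul (m / 2))).congr_deriv (by simp only [id]; push_cast; ring)
  refine Asymptotics.isLittleO_iff.2 fun c hc => ?_
  have hR' : ∀ᶠ x in 𝓝 a, ‖φ' x - φ' a - m * (x - a)‖ ≤ c * ‖x - a‖ := by
    simpa only [smul_eq_mul, mul_comm] using hφ'.isLittleO.bound hc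
  obtain ⟨δ, hδ, hball⟩ := Metric.eventually_nhds_iff_ball.1 (hR.and hR')
  filter_upwards [Metric.ball_mem_nhds a hδ] with x hx
  have hseg : ∀ y ∈ segment ℝ a x, ‖y - a‖ ≤ ‖x - a‖ := fun y hy => by
    simpa only [Metric.mem_closedBall, dist_eq_norm] using
      (convex_closedBall a (dist x a)).segment_subset (Metric.mem_closedBall_self dist_nonneg)
        (Metric.mem_closedBall.2 le_rfl) hy
  have hmem : ∀ y ∈ segment ℝ a x, y ∈ Metric.ball a δ := fun y hy =>
    (convex_ball a δ).segment_subset (Metric.mem_ball_self hδ) hx hy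
  have hmvt := (convex_segment a x).norm_image_sub_le_of_norm_hasDerivWithin_le
    (fun y hy => (hball y (hmem y hy)).1.hasDerivWithinAt)
    (fun y hy => (hball y (hmem y hy)).2.trans
      (mul_le_mul_of_nonneg_left (hseg y hy) hc.le))
    (left_mem_segment ℝ a x) (right_mem_segment ℝ a x)
  have hRa : R a = 0 := by simp [R]
  simpa only [hRa, sub_zero, mul_assoc, norm_mul, sq] using hmvt

theorem isBigO_sub_sq {φ φ' : ℝ → ℝ} {a m : ℝ} (hφ : ∀ᶠ x in 𝓝 a, HasDerivAt φ (φ' x) x)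
    (hφ' : HasDerivAt φ' m a) (hzero : φ a = 0) (hzero' : φ' a = 0) :
    φ =O[𝓝 a] fun x => (x - a) ^ 2 := by
  have htaylor := taylor_two_isLittleO hφ hφ'
  simp only [hzero, hzero', zero_mul, sub_zero] at htaylor
  exact (htaylor.isBigO.add ((Asymptotics.isBigO_refl _ _).const_mul_left _)).congr_left
    fun _ => sub_add_cancel _ _

theorem secondDiff_isLittleO {g : ℝ → ℝ} {a m : ℝ}
    (hg : (fun x => g x - g a - m * (x - a)) =o[𝓝[>] a] fun x => (x - a) ^ 2) :
    secondDiff g a =o[𝓝[>] 0] fun h => h ^ 2 := by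
  have hto {k : ℝ} (hk : 0 < k) : Tendsto (fun h : ℝ => a + k * h) (𝓝[>] 0) (𝓝[>] a) := by
    refine tendsto_nhdsWithin_iff.2 ⟨?_, ?_⟩
    · have : ContinuousAt (fun h : ℝ => a + k * h) 0 := by fun_prop
      simpa using this.tendsto.mono_left nhdsWithin_le_nhds
    · filter_upwards [self_mem_nhdsWithin] with h (hh : 0 < h)
      exact lt_add_of_pos_right a (mul_pos hk hh)
  have hone := (hg.comp_tendsto (hto one_pos)).const_mul_left 2
  have htwo := hg.comp_tendsto (hto two_pos)
  simp only [Function.comp_def, one_mul, add_sub_cancel_left] at hone htwo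
  have htwo' : (fun h => g (a + 2 * h) - g a - m * (2 * h)) =o[𝓝[>] 0] fun h => h ^ 2 :=
    htwo.trans_isBigO <| .of_bound 4 <| .of_forall fun h => by
      rw [mul_pow, norm_mul]; norm_num
  refine (htwo'.sub hone).congr_left fun h => ?_
  simp only [secondDiff]
  ring

theorem mul_sq_le_secondDiff_rpow {p R y h : ℝ} (hp : p ≤ 0) (hy : 0 < y) (hh : 0 ≤ h)
    (hR : y + 2 * h ≤ R) :
    p * (p - 1) * R ^ (p - 2) * h ^ 2 ≤ secondDiff (fun x => x ^ p) y h := by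
  set K := p * (p - 1) * R ^ (p - 2)
  have hder (x : ℝ) (hx : 0 < x) :
      HasDerivAt (fun x => x ^ p - K / 2 * x ^ 2) (p * x ^ (p - 1) - K * x) x :=
    ((Real.hasDerivAt_rpow_const (.inl hx.ne')).sub
      ((hasDerivAt_pow 2 x).const_mul (K / 2))).congr_deriv (by push_cast; ring)
  have hder₂ (x : ℝ) (hx : 0 < x) :
      HasDerivAt (fun x => p * x ^ (p - 1) - K * x) (p * ((p - 1) * x ^ (p - 1 - 1)) - K) x :=
    (((Real.hasDerivAt_rpow_const (.inl hx.ne')).const_mul p).sub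
      ((hasDerivAt_id x).const_mul K)).congr_deriv (by ring)
  have hconv : ConvexOn ℝ (Set.Ioc 0 R) (fun x => x ^ p - K / 2 * x ^ 2) := by
    refine convexOn_of_hasDerivWithinAt2_nonneg (convex_Ioc 0 R)
      (fun x hx => (hder x hx.1).continuousAt.continuousWithinAt)
      (fun x hx => (hder x (interior_subset hx).1).hasDerivWithinAt)
      (fun x hx => (hder₂ x (interior_subset hx).1).hasDerivWithinAt) fun x hx => ?_
    obtain ⟨hx0, hxR⟩ := interior_subset hx
    have hanti : R ^ (p - 2) ≤ x ^ (p - 2) :=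
      Real.rpow_le_rpow_of_nonpos hx0 hxR (by linarith)
    have hpp : 0 ≤ p * (p - 1) := mul_nonneg_of_nonpos_of_nonpos hp (by linarith)
    rw [show p - 1 - 1 = p - 2 by ring, ← mul_assoc, sub_nonneg]
    exact mul_le_mul_of_nonneg_left hanti hpp
  obtain ⟨-, hconv⟩ := hconv
  have hmid := hconv ⟨hy, by linarith⟩ ⟨by linarith, hR⟩ (a := 1 / 2) (b := 1 / 2)
    (by norm_num) (by norm_num) (by norm_num)
  simp only [smul_eq_mul, show 1 / 2 * y + 1 / 2 * (y + 2 * h) = y + h by ring] at hmid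
  simp only [secondDiff]
  linarith

theorem exists_mul_sub_le_of_hasDerivAt_neg {r : ℝ → ℝ} {a b d : ℝ}
    (hr : ContinuousOn r (Set.Icc a b)) (hab : a ≤ b) (hb : r b = 0) (hder : HasDerivAt r d b)
    (hd : d < 0) (hpos : ∀ x ∈ Set.Ico a b, 0 < r x) :
    ∃ c, 0 < c ∧ ∀ x ∈ Set.Icc a b, c * (b - x) ≤ r x := by
  have hcont : ContinuousOn (dslope r b) (Set.Icc a b) := fun x hx => by
    rcases eq_or_ne x b with rfl | hne
    · exact (continuousAt_dslope_same.2 hder.differentiableAt).continuousWithinAt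
    · exact (continuousWithinAt_dslope_of_ne hne).2 (hr x hx)
  obtain ⟨z, hz, hmax⟩ := isCompact_Icc.exists_isMaxOn (Set.nonempty_Icc.2 hab) hcont
  have hneg : dslope r b z < 0 := by
    rcases eq_or_ne z b with rfl | hne
    · rwa [dslope_same, hder.deriv]
    · have hzb : z < b := hz.2.lt_of_ne hne
      rw [dslope_of_ne _ hne, slope_def_field, hb, sub_zero]
      exact div_neg_of_pos_of_neg (hpos z ⟨hz.1, hzb⟩) (sub_neg.2 hzb)
  refine ⟨-dslope r b z, neg_pos.2 hneg, fun x hx => ?_⟩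
  have hslope := sub_smul_dslope r b x
  rw [hb, sub_zero, smul_eq_mul] at hslope
  calc -dslope r b z * (b - x) ≤ -dslope r b x * (b - x) :=
        mul_le_mul_of_nonneg_right (neg_le_neg (hmax hx)) (sub_nonneg.2 hx.2)
    _ = r x := by rw [← hslope]; ring

theorem neg_on_Icc_of_ne_zero {n : ℝ → ℝ} {a b : ℝ} (hn : ContinuousOn n (Set.Icc a b))
    (ha : n a < 0) (hne : ∀ T ∈ Set.Ioc a b, (∀ t ∈ Set.Ico a T, n t < 0) → n T ≠ 0) :
    ∀ t ∈ Set.Icc a b, n t < 0 := by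
  by_contra! hex
  obtain ⟨t, ht, hnt⟩ := hex
  set S := Set.Icc a b ∩ n ⁻¹' Set.Ici 0
  have hS : IsCompact S := isCompact_Icc.of_isClosed_subset
    (hn.preimage_isClosed_of_isClosed isClosed_Icc isClosed_Ici) Set.inter_subset_left
  obtain ⟨T, ⟨hT, hnT⟩, hleast⟩ := hS.exists_isLeast ⟨t, ht, hnt⟩
  have hbefore : ∀ t ∈ Set.Ico a T, n t < 0 := fun t ht =>
    not_le.1 fun h => ht.2.not_ge (hleast ⟨⟨ht.1, ht.2.le.trans hT.2⟩, h⟩)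
  have haT : a < T := hT.1.lt_of_ne (by rintro rfl; exact ha.not_ge hnT)
  refine hne T ⟨haT, hT.2⟩ hbefore (le_antisymm ?_ hnT)
  have hclos : T ∈ closure (Set.Ico a T) := by
    rw [closure_Ico haT.ne]; exact ⟨haT.le, le_rfl⟩
  exact closure_minimal (s := Set.Ico a T) (t := Set.Icc a T ∩ n ⁻¹' Set.Iic 0)
    (fun t ht => ⟨⟨ht.1, ht.2.le⟩, (hbefore t ht).le⟩)
    ((hn.mono (Set.Icc_subset_Icc_right hT.2)).preimage_isClosed_of_isClosed isClosed_Icc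
      isClosed_Iic) hclos |>.2

theorem monotoneOn_shift_div {f f' : ℝ → ℝ} {b s : ℝ} (hs : 0 ≤ s)
    (hf : ∀ x ∈ Set.Ioc 0 b, HasDerivAt f (f' x) x) (hpos : ∀ x ∈ Set.Ioc 0 b, 0 < f x)
    (hanti : AntitoneOn (fun x => f' x / f x) (Set.Ioc 0 b)) :
    MonotoneOn (fun x => f (x - s) / f x) (Set.Ioc s b) := by
  have hx₀ (x : ℝ) (hx : x ∈ Set.Ioc s b) : x ∈ Set.Ioc 0 b := ⟨hs.trans_lt hx.1, hx.2⟩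
  have hxs (x : ℝ) (hx : x ∈ Set.Ioc s b) : x - s ∈ Set.Ioc 0 b :=
    ⟨sub_pos.2 hx.1, by linarith [hx.2]⟩
  have hder (x : ℝ) (hx : x ∈ Set.Ioc s b) : HasDerivAt (fun x => f (x - s) / f x)
      ((f' (x - s) * f x - f (x - s) * f' x) / f x ^ 2) x :=
    ((hf _ (hxs x hx)).comp_sub_const x s).div (hf x (hx₀ x hx)) (hpos x (hx₀ x hx)).ne'
  refine monotoneOn_of_deriv_nonneg (convex_Ioc s b)
    (fun x hx => (hder x hx).continuousAt.continuousWithinAt)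
    (fun x hx => (hder x (interior_subset hx)).differentiableAt.differentiableWithinAt)
    fun x hx => ?_
  have hx := interior_subset hx
  have hle := hanti (hxs x hx) (hx₀ x hx) (sub_le_self x hs)
  simp only [div_le_div_iff₀ (hpos x (hx₀ x hx)) (hpos _ (hxs x hx))] at hle
  rw [(hder x hx).deriv]
  exact div_nonneg (by linarith) (sq_nonneg _)

theorem exists_abs_sub_le_of_contDiff {f : ℝ → ℝ} (hf : ContDiff ℝ 1 f) (a b : ℝ) :
    ∃ K, 0 < K ∧ ∀ x ∈ Set.Icc a b, ∀ y ∈ Set.Icc a b, |f x - f y| ≤ K * |x - y| := by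
  obtain ⟨K, hK⟩ := hf.contDiffOn.exists_lipschitzOnWith one_ne_zero (convex_Icc a b) isCompact_Icc
  refine ⟨K + 1, by positivity, fun x hx y hy => (hK.dist_le_mul x hx y hy).trans ?_⟩
  rw [Real.dist_eq]
  gcongr
  exact le_add_of_nonneg_right zero_le_one

/-! ### The Mittag-Leffler function and its kernels -/

theorem rpow_mul_exp_neg_le_Gamma {R y : ℝ} (hR : 0 < R) (hy : 1 ≤ y) :
    R ^ (y - 1) * Real.exp (-R) ≤ Real.Gamma y := by
  have hint := Real.GammaIntegral_convergent (zero_lt_one.trans_le hy)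
  have hsub : Set.Ioi R ⊆ Set.Ioi 0 := Set.Ioi_subset_Ioi hR.le
  have hexp : IntegrableOn (fun x => R ^ (y - 1) * Real.exp (-x)) (Set.Ioi R) :=
    (integrableOn_exp_neg_Ioi R).const_mul _
  calc R ^ (y - 1) * Real.exp (-R) = ∫ x in Set.Ioi R, R ^ (y - 1) * Real.exp (-x) := by
        rw [integral_const_mul, integral_exp_neg_Ioi]
    _ ≤ ∫ x in Set.Ioi R, Real.exp (-x) * x ^ (y - 1) := by
        refine setIntegral_mono_on hexp (hint.mono_set hsub) measurableSet_Ioi fun x hx => ?_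
        rw [mul_comm]
        have hRx : R ≤ x := (Set.mem_Ioi.1 hx).le
        gcongr
    _ ≤ ∫ x in Set.Ioi 0, Real.exp (-x) * x ^ (y - 1) := by
        refine setIntegral_mono_set hint ?_ hsub.eventuallyLE
        filter_upwards [ae_restrict_mem measurableSet_Ioi] with x hx
        exact mul_nonneg (Real.exp_nonneg _) (Real.rpow_nonneg (Set.mem_Ioi.1 hx).le _)
    _ = Real.Gamma y := (Real.Gamma_eq_integral (zero_lt_one.trans_le hy)).symm

theorem one_div_Gamma_sub_one (z : ℝ) : 1 / Real.Gamma (z - 1) = (z - 1) / Real.Gamma z := by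
  have h := Complex.one_div_Gamma_eq_self_mul_one_div_Gamma_add_one ((z - 1 : ℝ) : ℂ)
  rw [show ((z - 1 : ℝ) : ℂ) + 1 = (z : ℂ) by push_cast; ring, Complex.Gamma_ofReal,
    Complex.Gamma_ofReal] at h
  rw [one_div, div_eq_mul_inv]
  exact_mod_cast h

section MittagLeffler

variable {α : ℝ}

theorem summable_ML (hα : 0 < α) (β x : ℝ) :
    Summable fun k : ℕ => x ^ k / Real.Gamma (α * k + β) := by
  set R : ℝ := (2 * |x| + 1) ^ α⁻¹
  have hR : 0 < R := by positivity
  have hRα : R ^ α = 2 * |x| + 1 := Real.rpow_inv_rpow (by positivity) hα.ne'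
  have hgeom : Summable fun k : ℕ => (R ^ (β - 1) * Real.exp (-R))⁻¹ * (1 / 2 : ℝ) ^ k :=
    summable_geometric_two.mul_left _
  have hlarge : ∀ᶠ k : ℕ in atTop, 1 ≤ α * k + β :=
    (tendsto_atTop_add_const_right _ β
      (tendsto_natCast_atTop_atTop.const_mul_atTop hα)).eventually_ge_atTop 1
  refine hgeom.of_norm_bounded_eventually_nat ?_
  filter_upwards [hlarge] with k hk
  have hpow : R ^ (α * k + β - 1) = (2 * |x| + 1) ^ k * R ^ (β - 1) := by
    rw [add_sub_assoc, Real.rpow_add hR, Real.rpow_mul hR.le, hRα, Real.rpow_natCast]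
  have hΓ := rpow_mul_exp_neg_le_Gamma hR hk
  rw [hpow] at hΓ
  rw [norm_div, norm_pow, Real.norm_eq_abs, Real.norm_of_nonneg (le_trans (by positivity) hΓ)]
  calc |x| ^ k / Real.Gamma (α * k + β)
      ≤ ((2 * |x| + 1) / 2) ^ k / ((2 * |x| + 1) ^ k * R ^ (β - 1) * Real.exp (-R)) := by
        gcongr
        linarith
    _ = (R ^ (β - 1) * Real.exp (-R))⁻¹ * (1 / 2) ^ k := by
        rw [div_eq_mul_one_div (2 * |x| + 1), mul_pow]
        field_simp

theorem hasFPowerSeriesOnBall_ML (hα : 0 < α) (β : ℝ) :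
    HasFPowerSeriesOnBall (ML α β)
      (.ofScalars ℝ fun k : ℕ => (Real.Gamma (α * k + β))⁻¹) 0 ⊤ := by
  set p : FormalMultilinearSeries ℝ ℝ ℝ := .ofScalars ℝ fun k : ℕ => (Real.Gamma (α * k + β))⁻¹
  have hsum : p.sum = ML α β := by
    ext x
    simp only [p, FormalMultilinearSeries.sum, FormalMultilinearSeries.ofScalars_apply_eq,
      smul_eq_mul, ML, div_eq_inv_mul]
  have hrad : p.radius = ⊤ := p.radius_eq_top_of_summable_norm fun r => by
    refine (summable_ML hα β r).norm.congr fun k => ?_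
    rw [FormalMultilinearSeries.ofScalars_norm, norm_div, norm_inv, norm_pow, NNReal.norm_eq,
      div_eq_inv_mul]
  rw [← hsum, ← hrad]
  exact p.hasFPowerSeriesOnBall (by simp [hrad])

theorem contDiff_ML (hα : 0 < α) (β : ℝ) {n : WithTop ℕ∞} : ContDiff ℝ n (ML α β) := by
  have h := (hasFPowerSeriesOnBall_ML hα β).analyticOnNhd
  rw [Metric.eball_top] at h
  exact h.contDiff

theorem mul_deriv_ML (hα : 0 < α) (β x : ℝ) :
    α * x * deriv (ML α β) x = ML α (β - 1) x - (β - 1) * ML α β x := by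
  have hderiv : HasSum (fun k : ℕ => (k + 1) * x ^ k / Real.Gamma (α * (k + 1) + β))
      (deriv (ML α β) x) := by
    have h := ((hasFPowerSeriesOnBall_ML hα β).fderiv.hasSum (y := x) (by simp)).mapL
      (ContinuousLinearMap.apply ℝ ℝ (1 : ℝ))
    rw [zero_add] at h
    refine h.congr_fun fun k => ?_
    rw [FormalMultilinearSeries.apply_eq_pow_smul_coeff, map_smul,
      ContinuousLinearMap.apply_apply, FormalMultilinearSeries.derivSeries_coeff_one,
      FormalMultilinearSeries.coeff_ofScalars]
    simp only [smul_eq_mul, nsmul_eq_mul]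
    push_cast
    ring
  have hshift : HasSum (fun k : ℕ => α * k * (x ^ k / Real.Gamma (α * k + β)))
      (α * x * deriv (ML α β) x) := by
    rw [← hasSum_nat_add_iff' 1]
    simp only [Finset.range_one, Finset.sum_singleton, Nat.cast_zero, mul_zero, zero_mul, sub_zero]
    refine (hderiv.mul_left (α * x)).congr_fun fun k => ?_
    push_cast
    ring
  refine hshift.unique (((summable_ML hα (β - 1) x).hasSum.sub
    ((summable_ML hα β x).hasSum.mul_left (β - 1))).congr_fun fun k => ?_)
  rw [← add_sub_assoc, div_eq_mul_one_div _ (Real.Gamma (_ - 1)), one_div_Gamma_sub_one]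
  ring

theorem ML_eq_add_mul (hα : 0 < α) (β x : ℝ) :
    ML α β x = 1 / Real.Gamma β + x * ML α (β + α) x := by
  simp only [ML]
  rw [(summable_ML hα β x).tsum_eq_zero_add, ← tsum_mul_left]
  congr 1
  · simp
  · refine tsum_congr fun k => ?_
    push_cast
    rw [show α * ((k : ℝ) + 1) + β = α * k + (β + α) by ring, pow_succ]
    ring

theorem ML_zero (α β : ℝ) : ML α β 0 = 1 / Real.Gamma β := by
  rw [ML, tsum_eq_single 0 fun k hk => by simp [hk]]
  simp

theorem ML_pos_of_nonneg {β x : ℝ} (hα : 0 < α) (hβ : 0 < β) (hx : 0 ≤ x) : 0 < ML α β x := by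
  have hΓ (k : ℕ) : 0 < Real.Gamma (α * k + β) := Real.Gamma_pos_of_pos (by positivity)
  refine (summable_ML hα β x).tsum_pos (fun k => div_nonneg (by positivity) (hΓ k).le) 0 ?_
  simpa using hΓ 0

theorem ML_pos_of_forall_zero_lt {β x : ℝ} (hα : 0 < α) (hβ : 0 < β)
    (hx : ∀ μ, ML α β μ = 0 → μ < x) : 0 < ML α β x := by
  by_contra! hneg
  have hpos : 0 < ML α β (max x 0) := ML_pos_of_nonneg hα hβ (le_max_right x 0)
  obtain ⟨μ, hμ, hμ0⟩ := intermediate_value_Icc (le_max_left x 0)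
    (contDiff_ML hα β (n := 0)).continuous.continuousOn ⟨hneg, hpos.le⟩
  exact (hx μ hμ0).not_ge hμ.1

end MittagLeffler

/-- `t ↦ E_{α,β}(λ t^α)`, the regular factor of the Mittag-Leffler kernel. -/
noncomputable def mlPow (α lam β t : ℝ) : ℝ := ML α β (lam * t ^ α)

/-- The Mittag-Leffler kernel `F_β(t) = t^{β-1} E_{α,β}(λ t^α)`, on which differentiation and
fractional integration act by shifting `β`. -/
noncomputable def mlKernel (α lam β t : ℝ) : ℝ := t ^ (β - 1) * mlPow α lam β t

section Kernel

variable {α lam : ℝ}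

theorem mlPow_zero (hα : α ≠ 0) (β : ℝ) : mlPow α lam β 0 = 1 / Real.Gamma β := by
  rw [mlPow, Real.zero_rpow hα, mul_zero, ML_zero]

theorem mlPow_one (α lam β : ℝ) : mlPow α lam β 1 = ML α β lam := by
  rw [mlPow, Real.one_rpow, mul_one]

theorem continuous_mlPow (hα : 0 < α) (β : ℝ) : Continuous (mlPow α lam β) :=
  (contDiff_ML hα β (n := 0)).continuous.comp
    (continuous_const.mul (Real.continuous_rpow_const hα.le))

theorem contDiff_one_mlPow (hα : 1 ≤ α) (β : ℝ) : ContDiff ℝ 1 (mlPow α lam β) :=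
  (contDiff_ML (zero_lt_one.trans_le hα) β).comp
    (contDiff_const.mul (by exact_mod_cast Real.contDiff_rpow_const_of_le (n := 1) (by simpa)))

theorem mlKernel_zero {β : ℝ} (hβ : β ≠ 1) : mlKernel α lam β 0 = 0 := by
  rw [mlKernel, Real.zero_rpow (sub_ne_zero.2 hβ), zero_mul]

theorem hasDerivAt_mlKernel (hα : 0 < α) (β : ℝ) {t : ℝ} (ht : 0 < t) :
    HasDerivAt (mlKernel α lam β) (mlKernel α lam (β - 1) t) t := by
  have hML : HasDerivAt (ML α β) (deriv (ML α β) (lam * t ^ α)) (lam * t ^ α) :=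
    ((contDiff_ML hα β).differentiable one_ne_zero _).hasDerivAt
  have hpow : HasDerivAt (fun u => lam * u ^ α) (lam * (α * t ^ (α - 1))) t :=
    (Real.hasDerivAt_rpow_const (.inl ht.ne')).const_mul lam
  have hmul := (Real.hasDerivAt_rpow_const (p := β - 1) (.inl ht.ne')).mul (hML.comp t hpow)
  refine hmul.congr_deriv ?_
  have hrec := mul_deriv_ML hα β (lam * t ^ α)
  simp only [mlKernel, mlPow, Function.comp_apply]
  calc (β - 1) * t ^ (β - 1 - 1) * ML α β (lam * t ^ α) +
        t ^ (β - 1) * (deriv (ML α β) (lam * t ^ α) * (lam * (α * t ^ (α - 1))))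
      = t ^ (β - 1 - 1) * ((β - 1) * ML α β (lam * t ^ α) +
          α * (lam * t ^ α) * deriv (ML α β) (lam * t ^ α)) := by
        rw [Real.rpow_sub_one ht.ne' (β - 1), Real.rpow_sub_one ht.ne' α]
        field_simp
    _ = t ^ (β - 1 - 1) * ML α (β - 1) (lam * t ^ α) := by rw [hrec]; ring

theorem mlKernel_eq_add (hα : 0 < α) (β : ℝ) {t : ℝ} (ht : 0 < t) :
    mlKernel α lam β t = t ^ (β - 1) / Real.Gamma β + lam * mlKernel α lam (β + α) t := by
  simp only [mlKernel, mlPow]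
  rw [ML_eq_add_mul hα β, add_sub_right_comm, Real.rpow_add ht]
  ring

theorem mlKernel_eq_mul_of_Gamma_eq_zero (hα : 0 < α) {β t : ℝ} (ht : 0 < t)
    (hβ : Real.Gamma β = 0) : mlKernel α lam β t = lam * mlKernel α lam (β + α) t := by
  rw [mlKernel_eq_add hα β ht, hβ, div_zero, zero_add]

theorem hasSum_mlKernel (hα : 0 < α) (β : ℝ) {t : ℝ} (ht : 0 < t) :
    HasSum (fun k : ℕ => lam ^ k / Real.Gamma (α * k + β) * t ^ (α * k + β - 1))
      (mlKernel α lam β t) := by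
  refine ((summable_ML hα β (lam * t ^ α)).hasSum.mul_left (t ^ (β - 1))).congr_fun fun k => ?_
  rw [add_sub_assoc, Real.rpow_add ht, Real.rpow_mul ht.le, Real.rpow_natCast, mul_pow]
  ring

theorem mlPow_pos {β : ℝ} (hα : 0 < α) (hβ : 0 < β) (hlam : ∀ μ, ML α β μ = 0 → μ < lam) :
    ∀ t ∈ Set.Icc (0 : ℝ) 1, 0 < mlPow α lam β t := fun t ht => by
  have hpow : t ^ α ≤ 1 := Real.rpow_le_one ht.1 ht.2 hα.le
  rcases le_total 0 lam with hlam₀ | hlam₀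
  · exact ML_pos_of_nonneg hα hβ (mul_nonneg hlam₀ (Real.rpow_nonneg ht.1 α))
  · exact ML_pos_of_forall_zero_lt hα hβ fun μ hμ =>
      (hlam μ hμ).trans_le (le_mul_of_le_one_right hlam₀ hpow)

theorem mlKernel_pos_iff {β t : ℝ} (ht : 0 < t) :
    0 < mlKernel α lam β t ↔ 0 < mlPow α lam β t :=
  mul_pos_iff_of_pos_left (Real.rpow_pos_of_pos ht _)

theorem mlKernel_pos {β b : ℝ} (hα : 0 < α) (hβ : 1 < β)
    (hpos : ∀ t ∈ Set.Ioo 0 b, 0 < mlKernel α lam (β - 1) t) :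
    ∀ t ∈ Set.Ioc 0 b, 0 < mlKernel α lam β t := fun t ht => by
  have hcont : Continuous (mlKernel α lam β) :=
    (Real.continuous_rpow_const (by linarith)).mul (continuous_mlPow hα β)
  have hmono : StrictMonoOn (mlKernel α lam β) (Set.Icc 0 b) := by
    refine strictMonoOn_of_deriv_pos (convex_Icc 0 b) hcont.continuousOn fun u hu => ?_
    rw [interior_Icc] at hu
    rw [(hasDerivAt_mlKernel hα β hu.1).deriv]
    exact hpos u hu
  rw [← mlKernel_zero (α := α) (lam := lam) hβ.ne']
  exact hmono ⟨le_rfl, ht.1.le.trans ht.2⟩ ⟨ht.1.le, ht.2⟩ ht.1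

theorem mlKernel_one (β : ℝ) : mlKernel α lam β 1 = mlPow α lam β 1 := by
  rw [mlKernel, Real.one_rpow, one_mul]

theorem rpow_two_sub_mul_mlKernel {t : ℝ} (ht : 0 < t) (β : ℝ) :
    t ^ (2 - β) * mlKernel α lam β t = t * mlPow α lam β t := by
  rw [mlKernel, ← mul_assoc, ← Real.rpow_add ht, show 2 - β + (β - 1) = 1 by ring, Real.rpow_one]

theorem rpow_two_sub_mul_mlKernel_sub_one {t : ℝ} (ht : 0 < t) (β : ℝ) :
    t ^ (2 - β) * mlKernel α lam (β - 1) t = mlPow α lam (β - 1) t := by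
  rw [mlKernel, ← mul_assoc, ← Real.rpow_add ht, show 2 - β + (β - 1 - 1) = 0 by ring,
    Real.rpow_zero, one_mul]

end Kernel

/-- The Riemann–Liouville fractional integral of order `γ` based at `0`, which shifts the index of
the Mittag-Leffler kernels by `γ`. -/
noncomputable def rlIntegral (γ : ℝ) (f : ℝ → ℝ) (t : ℝ) : ℝ :=
  (Real.Gamma γ)⁻¹ * ∫ u in (0 : ℝ)..t, (t - u) ^ (γ - 1) * f u

section FractionalIntegral

variable {α lam β γ t : ℝ}

theorem integral_sub_rpow_mul_rpow (hβ : 0 < β) (hγ : 0 < γ) (ht : 0 < t) :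
    ∫ u in (0 : ℝ)..t, (t - u) ^ (γ - 1) * u ^ (β - 1) =
      t ^ (β + γ - 1) * (Real.Gamma β * Real.Gamma γ / Real.Gamma (β + γ)) := by
  have h := Complex.betaIntegral_scaled β γ ht
  rw [Complex.betaIntegral_eq_Gamma_mul_div _ _ (by simpa) (by simpa)] at h
  have hreal : ∫ u in (0 : ℝ)..t, ((u : ℂ) ^ ((β : ℂ) - 1) * ((t : ℂ) - u) ^ ((γ : ℂ) - 1)) =
      ((∫ u in (0 : ℝ)..t, (t - u) ^ (γ - 1) * u ^ (β - 1) : ℝ) : ℂ) := by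
    rw [← intervalIntegral.integral_ofReal]
    refine intervalIntegral.integral_congr fun u hu => ?_
    rw [Set.uIcc_of_le ht.le] at hu
    push_cast [Complex.ofReal_cpow hu.1, Complex.ofReal_cpow (sub_nonneg.2 hu.2)]
    ring
  rw [hreal] at h
  rw [← Complex.ofReal_inj, h]
  push_cast [Complex.ofReal_cpow ht.le, ← Complex.Gamma_ofReal]
  rfl

theorem intervalIntegrable_sub_rpow_mul_rpow (hβ : 0 < β) (hγ : 0 < γ) (ht : 0 < t) :
    IntervalIntegrable (fun u => (t - u) ^ (γ - 1) * u ^ (β - 1)) volume 0 t := by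
  refine intervalIntegral.intervalIntegrable_of_integral_ne_zero ?_
  rw [integral_sub_rpow_mul_rpow hβ hγ ht]
  have := Real.Gamma_pos_of_pos hβ
  have := Real.Gamma_pos_of_pos hγ
  have := Real.Gamma_pos_of_pos (add_pos hβ hγ)
  positivity

theorem intervalIntegrable_sub_rpow_mul_mlKernel (hα : 0 < α) (hβ : 0 < β) (hγ : 0 < γ)
    (ht : 0 < t) :
    IntervalIntegrable (fun u => (t - u) ^ (γ - 1) * mlKernel α lam β u) volume 0 t := by
  simpa only [mlKernel, mul_assoc] using
    (intervalIntegrable_sub_rpow_mul_rpow hβ hγ ht).mul_continuousOn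
      (continuous_mlPow (lam := lam) hα β).continuousOn

theorem setIntegral_sub_rpow_mul_mlKernel_term (hα : 0 < α) (hβ : 0 < β) (hγ : 0 < γ) (ht : 0 < t)
    (c : ℝ) (k : ℕ) : ∫ u in Set.Ioc 0 t,
      c / Real.Gamma (α * k + β) * ((t - u) ^ (γ - 1) * u ^ (α * k + β - 1)) =
        Real.Gamma γ * (c / Real.Gamma (α * k + (β + γ)) * t ^ (α * k + (β + γ) - 1)) := by
  have hβk : 0 < α * k + β := by positivity
  have := (Real.Gamma_pos_of_pos hβk).ne'
  rw [integral_const_mul, ← intervalIntegral.integral_of_le ht.le,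
    integral_sub_rpow_mul_rpow hβk hγ ht, ← add_assoc]
  field_simp

theorem rlIntegral_mlKernel (hα : 0 < α) (hβ : 0 < β) (hγ : 0 < γ) (ht : 0 < t) :
    rlIntegral γ (mlKernel α lam β) t = mlKernel α lam (β + γ) t := by
  have hβk (k : ℕ) : 0 < α * k + β := by positivity
  have hint (k : ℕ) (c : ℝ) : IntegrableOn
      (fun u => c / Real.Gamma (α * k + β) * ((t - u) ^ (γ - 1) * u ^ (α * k + β - 1)))
      (Set.Ioc 0 t) :=
    ((intervalIntegrable_iff_integrableOn_Ioc_of_le ht.le).1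
      (intervalIntegrable_sub_rpow_mul_rpow (hβk k) hγ ht)).const_mul _
  have hnorm (k : ℕ) : ∫ u in Set.Ioc 0 t,
      ‖lam ^ k / Real.Gamma (α * k + β) * ((t - u) ^ (γ - 1) * u ^ (α * k + β - 1))‖ =
        Real.Gamma γ * (|lam| ^ k / Real.Gamma (α * k + (β + γ)) *
          t ^ (α * k + (β + γ) - 1)) := by
    rw [← setIntegral_sub_rpow_mul_mlKernel_term hα hβ hγ ht]
    refine setIntegral_congr_fun measurableSet_Ioc fun u hu => ?_
    rw [norm_mul, norm_div, norm_pow, Real.norm_eq_abs lam,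
      Real.norm_of_nonneg (Real.Gamma_pos_of_pos (hβk k)).le, Real.norm_of_nonneg
        (mul_nonneg (Real.rpow_nonneg (sub_nonneg.2 hu.2) _) (Real.rpow_nonneg hu.1.le _))]
  have hsum := hasSum_integral_of_summable_integral_norm (fun k => hint k (lam ^ k)) <| by
    simpa only [hnorm] using (hasSum_mlKernel (lam := |lam|) hα (β + γ) ht).summable.mul_left _
  have htsum : ∫ u in Set.Ioc 0 t, (t - u) ^ (γ - 1) * mlKernel α lam β u =
      ∫ u in Set.Ioc 0 t, ∑' k : ℕ,
        lam ^ k / Real.Gamma (α * k + β) * ((t - u) ^ (γ - 1) * u ^ (α * k + β - 1)) := by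
    refine setIntegral_congr_fun measurableSet_Ioc fun u hu => ?_
    rw [← (hasSum_mlKernel hα β hu.1).tsum_eq, ← tsum_mul_left]
    exact tsum_congr fun k => mul_left_comm _ _ _
  simp only [setIntegral_sub_rpow_mul_mlKernel_term hα hβ hγ ht] at hsum
  rw [rlIntegral, intervalIntegral.integral_of_le ht.le, htsum,
    hsum.unique ((hasSum_mlKernel hα (β + γ) ht).mul_left _),
    inv_mul_cancel_left₀ (Real.Gamma_pos_of_pos hγ).ne']

end FractionalIntegral

/-! ### Fractional integrals near a touching point -/

section Touching

variable {γ T : ℝ} {f g : ℝ → ℝ}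

theorem rlIntegral_sub_const_mul {t : ℝ} (q : ℝ)
    (hf : IntervalIntegrable (fun u => (t - u) ^ (γ - 1) * f u) volume 0 t)
    (hg : IntervalIntegrable (fun u => (t - u) ^ (γ - 1) * g u) volume 0 t) :
    rlIntegral γ (fun u => f u - q * g u) t = rlIntegral γ f t - q * rlIntegral γ g t := by
  simp only [rlIntegral, mul_sub, mul_left_comm _ q]
  rw [intervalIntegral.integral_sub hf (hg.const_mul q), intervalIntegral.integral_const_mul]
  ring

theorem norm_integral_sub_rpow_mul_le {d B : ℝ} (hγ : 0 < γ) (hd : 0 ≤ d)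
    (hf : ∀ u ∈ Set.Ioc T (T + d), ‖f u‖ ≤ B) :
    ‖∫ u in T..T + d, (T + d - u) ^ (γ - 1) * f u‖ ≤ d ^ γ / γ * B := by
  have hint : IntervalIntegrable (fun u => (T + d - u) ^ (γ - 1) * B) volume T (T + d) := by
    have := (intervalIntegral.intervalIntegrable_rpow' (a := d) (b := 0)
      (show -1 < γ - 1 by linarith)).comp_sub_left (T + d)
    simpa using this.mul_const B
  have hle : ∀ᵐ u, u ∈ Set.Ioc T (T + d) →
      ‖(T + d - u) ^ (γ - 1) * f u‖ ≤ (T + d - u) ^ (γ - 1) * B := .of_forall fun u hu => by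
    have hker : 0 ≤ (T + d - u) ^ (γ - 1) := Real.rpow_nonneg (sub_nonneg.2 hu.2) _
    rw [norm_mul, Real.norm_of_nonneg hker]
    exact mul_le_mul_of_nonneg_left (hf u hu) hker
  calc ‖∫ u in T..T + d, (T + d - u) ^ (γ - 1) * f u‖
      ≤ ∫ u in T..T + d, (T + d - u) ^ (γ - 1) * B :=
        intervalIntegral.norm_integral_le_of_norm_le (by linarith) hle hint
    _ = d ^ γ / γ * B := by
        rw [intervalIntegral.integral_mul_const,
          intervalIntegral.integral_comp_sub_left (fun x => x ^ (γ - 1)) (T + d),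
          integral_rpow (.inl (by linarith))]
        simp only [sub_self, add_sub_cancel_left, sub_add_cancel, Real.zero_rpow hγ.ne', sub_zero]

theorem isLittleO_integral_tail (hγ : 0 < γ) (hf : f =O[𝓝[>] T] fun u => (u - T) ^ 2) :
    (fun d => ∫ u in T..T + d, (T + d - u) ^ (γ - 1) * f u) =o[𝓝[>] 0] fun d => d ^ 2 := by
  obtain ⟨C, hC, hbound⟩ := hf.exists_pos
  obtain ⟨b, hTb, hb⟩ := mem_nhdsGT_iff_exists_Ioc_subset.1 hbound.bound
  have hO : (fun d => ∫ u in T..T + d, (T + d - u) ^ (γ - 1) * f u) =O[𝓝[>] 0]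
      fun d => d ^ γ * d ^ 2 := by
    refine .of_bound (C / γ) ?_
    filter_upwards [Ioc_mem_nhdsGT (sub_pos.2 hTb)] with d hd
    have hfd : ∀ u ∈ Set.Ioc T (T + d), ‖f u‖ ≤ C * d ^ 2 := fun u hu => by
      have hfu : ‖f u‖ ≤ C * ‖(u - T) ^ 2‖ := hb ⟨hu.1, by linarith [hu.2, hd.2]⟩
      rw [Real.norm_of_nonneg (sq_nonneg (u - T))] at hfu
      have : 0 ≤ u - T := sub_nonneg.2 hu.1.le
      have : u - T ≤ d := by linarith [hu.2]
      exact hfu.trans (by gcongr)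
    refine (norm_integral_sub_rpow_mul_le hγ hd.1.le hfd).trans_eq ?_
    rw [Real.norm_of_nonneg (mul_nonneg (Real.rpow_nonneg hd.1.le γ) (sq_nonneg d))]
    ring
  have hdγ : (fun d : ℝ => d ^ γ) =o[𝓝[>] 0] fun _ => (1 : ℝ) := by
    rw [Asymptotics.isLittleO_one_iff]
    have := (Real.continuousAt_rpow_const 0 γ (.inr hγ.le)).tendsto
    rw [Real.zero_rpow hγ.ne'] at this
    exact this.mono_left nhdsWithin_le_nhds
  simpa only [one_mul] using hO.trans_isLittleO
    (hdγ.mul_isBigO (Asymptotics.isBigO_refl (fun d : ℝ => d ^ 2) _))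

theorem intervalIntegrable_of_sub_rpow_mul {t : ℝ} (hγ : γ ≤ 1) (hT : 0 ≤ T) (hTt : T < t)
    (hf : IntervalIntegrable (fun u => (t - u) ^ (γ - 1) * f u) volume 0 T) :
    IntervalIntegrable f volume 0 T := by
  have hcont : ContinuousOn (fun u => (t - u) ^ (1 - γ)) (Set.uIcc 0 T) :=
    (Real.continuous_rpow_const (by linarith)).comp_continuousOn (by fun_prop)
  refine (hf.mul_continuousOn hcont).congr fun u hu => ?_
  rw [Set.uIoc_of_le hT] at hu
  have hbase : 0 < t - u := by linarith [hu.2]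
  rw [mul_right_comm, ← Real.rpow_add hbase]
  simp

theorem exists_mul_sq_le_secondDiff_integral (hγ : γ < 1) (hT : 0 < T)
    (hpos : ∀ u ∈ Set.Ioo 0 T, 0 < f u)
    (hint : ∀ t, T ≤ t → IntervalIntegrable (fun u => (t - u) ^ (γ - 1) * f u) volume 0 T) :
    ∃ c, 0 < c ∧ ∀ h ∈ Set.Ioc (0 : ℝ) 1,
      c * h ^ 2 ≤ secondDiff (fun t => ∫ u in (0 : ℝ)..T, (t - u) ^ (γ - 1) * f u) T h := by
  set k := (γ - 1) * (γ - 1 - 1) * (T + 2) ^ (γ - 1 - 2)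
  have hk : 0 < k :=
    mul_pos (mul_pos_of_neg_of_neg (by linarith) (by linarith)) (by positivity)
  have hfint : IntervalIntegrable f volume 0 T :=
    intervalIntegrable_of_sub_rpow_mul hγ.le hT.le (lt_add_one T) (hint (T + 1) (by linarith))
  refine ⟨k * ∫ u in (0 : ℝ)..T, f u,
    mul_pos hk (intervalIntegral.intervalIntegral_pos_of_pos_on hfint hpos hT), fun h hh => ?_⟩
  have hint₀ := hint T le_rfl
  have hint₁ := (hint (T + h) (by linarith [hh.1])).const_mul 2
  have hint₂ := hint (T + 2 * h) (by linarith [hh.1])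
  calc k * (∫ u in (0 : ℝ)..T, f u) * h ^ 2 = ∫ u in (0 : ℝ)..T, k * h ^ 2 * f u := by
        rw [intervalIntegral.integral_const_mul]; ring
    _ ≤ ∫ u in (0 : ℝ)..T, ((T + 2 * h - u) ^ (γ - 1) * f u -
          2 * ((T + h - u) ^ (γ - 1) * f u) + (T - u) ^ (γ - 1) * f u) := by
        refine intervalIntegral.integral_mono_on_of_le_Ioo hT.le (hfint.const_mul _)
          ((hint₂.sub hint₁).add hint₀) fun u hu => ?_
        have hsec := mul_sq_le_secondDiff_rpow (p := γ - 1) (R := T + 2) (y := T - u) (h := h)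
          (by linarith) (sub_pos.2 hu.2) hh.1.le (by linarith [hu.1, hh.2])
        calc k * h ^ 2 * f u ≤ secondDiff (fun x => x ^ (γ - 1)) (T - u) h * f u :=
              mul_le_mul_of_nonneg_right hsec (hpos u hu).le
          _ = _ := by
              simp only [secondDiff, sub_add_eq_add_sub]
              ring
    _ = _ := by
        rw [intervalIntegral.integral_add (hint₂.sub hint₁) hint₀,
          intervalIntegral.integral_sub hint₂ hint₁, intervalIntegral.integral_const_mul]
        rfl

-- The mass of `f` on `(0, T)` bends the integral upwards by order `h²`, because the kernel
-- `x ^ (γ - 1)` is strictly convex, while the part beyond `T` only contributes `O(h^(2 + γ))`.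
theorem not_isLittleO_secondDiff_rlIntegral (hγ₀ : 0 < γ) (hγ₁ : γ < 1) (hT : 0 < T)
    (hpos : ∀ u ∈ Set.Ioo 0 T, 0 < f u) (hf : f =O[𝓝[>] T] fun u => (u - T) ^ 2)
    (hint : ∀ t, T ≤ t → IntervalIntegrable (fun u => (t - u) ^ (γ - 1) * f u) volume 0 t) :
    ¬ (secondDiff (rlIntegral γ f) T =o[𝓝[>] 0] fun h => h ^ 2) := by
  intro hsmall
  set head : ℝ → ℝ := fun t => ∫ u in (0 : ℝ)..T, (t - u) ^ (γ - 1) * f u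
  set tail : ℝ → ℝ := fun d => ∫ u in T..T + d, (T + d - u) ^ (γ - 1) * f u
  have hhead (t : ℝ) (ht : T ≤ t) : IntervalIntegrable (fun u => (t - u) ^ (γ - 1) * f u)
      volume 0 T := (hint t ht).mono_set (by
    rw [Set.uIcc_of_le hT.le, Set.uIcc_of_le (hT.le.trans ht)]
    exact Set.Icc_subset_Icc_right ht)
  have hsplit (d : ℝ) (hd : 0 ≤ d) :
      rlIntegral γ f (T + d) = (Real.Gamma γ)⁻¹ * (head (T + d) + tail d) := by
    have htail := (hhead (T + d) (by linarith)).symm.trans (hint (T + d) (by linarith))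
    rw [rlIntegral, ← intervalIntegral.integral_add_adjacent_intervals
      (hhead (T + d) (by linarith)) htail]
  obtain ⟨c, hc, hlower⟩ := exists_mul_sq_le_secondDiff_integral hγ₁ hT hpos hhead
  have htail : tail =o[𝓝[>] 0] fun d => d ^ 2 := isLittleO_integral_tail hγ₀ hf
  have htail₀ : tail 0 = 0 := by simp [tail]
  have htail₂ : secondDiff tail 0 =o[𝓝[>] 0] fun h => h ^ 2 :=
    secondDiff_isLittleO (m := 0) (by simpa [htail₀] using htail)
  have hhead₂ : secondDiff head T =o[𝓝[>] 0] fun h => h ^ 2 := by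
    refine ((hsmall.const_mul_left (Real.Gamma γ)).sub htail₂).congr' ?_ .rfl
    filter_upwards [self_mem_nhdsWithin] with h (hh : 0 < h)
    have hΓ : Real.Gamma γ ≠ 0 := (Real.Gamma_pos_of_pos hγ₀).ne'
    have hat := hsplit 0 le_rfl
    rw [add_zero] at hat
    simp only [secondDiff, hsplit h hh.le, hsplit (2 * h) (by linarith), hat, zero_add]
    field_simp
    ring
  obtain ⟨h, hle, hh⟩ := ((hhead₂.bound (half_pos hc)).and
    (Ioc_mem_nhdsGT (zero_lt_one (α := ℝ)))).exists
  have hsq : 0 < h ^ 2 := by have := hh.1; positivity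
  rw [Real.norm_of_nonneg hsq.le] at hle
  nlinarith [hlower h hh, (le_abs_self _).trans hle]

end Touching

/-! ### Log-concavity of the kernel -/

/-- The Turán-type determinant `E_{α,β-2} E_{α,β} - E_{α,β-1}²` at `λ t^α`; where `F_β` is
positive its sign is that of the derivative of `F_{β-1} / F_β`. -/
noncomputable def turanDet (α lam β t : ℝ) : ℝ :=
  mlPow α lam (β - 2) t * mlPow α lam β t - mlPow α lam (β - 1) t ^ 2

section LogConcavity

variable {α lam : ℝ}

theorem continuous_turanDet (hα : 0 < α) (β : ℝ) : Continuous (turanDet α lam β) :=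
  ((continuous_mlPow hα _).mul (continuous_mlPow hα _)).sub ((continuous_mlPow hα _).pow 2)

theorem turanDet_zero_neg (hα : α ≠ 0) {β : ℝ} (hβ : 1 < β) : turanDet α lam β 0 < 0 := by
  have hΓ : 0 < Real.Gamma β := Real.Gamma_pos_of_pos (by linarith)
  have hdet : turanDet α lam β 0 = -((β - 1) / Real.Gamma β ^ 2) := by
    rw [turanDet, mlPow_zero hα, mlPow_zero hα, mlPow_zero hα,
      show β - 2 = β - 1 - 1 by ring, one_div_Gamma_sub_one, div_eq_mul_one_div _ (Real.Gamma _),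
      one_div_Gamma_sub_one]
    ring
  rw [hdet, neg_lt_zero]
  exact div_pos (by linarith) (pow_pos hΓ 2)

theorem mlKernel_mul_sub_sq (β : ℝ) {t : ℝ} (ht : 0 < t) :
    mlKernel α lam (β - 2) t * mlKernel α lam β t - mlKernel α lam (β - 1) t ^ 2 =
      (t ^ (β - 2)) ^ 2 * turanDet α lam β t := by
  have hlow : t ^ (β - 2 - 1) = t ^ (β - 2) / t := Real.rpow_sub_one ht.ne' _
  have hmid : t ^ (β - 1 - 1) = t ^ (β - 2) := by ring_nf
  have hhigh : t ^ (β - 1) = t ^ (β - 2) * t := by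
    rw [← Real.rpow_add_one ht.ne']; ring_nf
  simp only [mlKernel, turanDet, hlow, hmid, hhigh]
  field_simp

theorem hasDerivAt_mlKernel_div (hα : 0 < α) {β t : ℝ} (ht : 0 < t)
    (hpos : 0 < mlKernel α lam β t) :
    HasDerivAt (fun u => mlKernel α lam (β - 1) u / mlKernel α lam β u)
      ((t ^ (β - 2)) ^ 2 * turanDet α lam β t / mlKernel α lam β t ^ 2) t := by
  refine ((hasDerivAt_mlKernel hα (β - 1) ht).div (hasDerivAt_mlKernel hα β ht)
    hpos.ne').congr_deriv ?_
  rw [← mlKernel_mul_sub_sq β ht, show β - 1 - 1 = β - 2 by ring, sq (mlKernel α lam (β - 1) t)]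

theorem strictAntiOn_mlKernel_div (hα : 0 < α) {β T : ℝ}
    (hpos : ∀ t ∈ Set.Ioc 0 T, 0 < mlKernel α lam β t)
    (hneg : ∀ t ∈ Set.Ioo 0 T, turanDet α lam β t < 0) :
    StrictAntiOn (fun t => mlKernel α lam (β - 1) t / mlKernel α lam β t) (Set.Ioc 0 T) := by
  refine strictAntiOn_of_deriv_neg (convex_Ioc 0 T) (fun t ht =>
    (hasDerivAt_mlKernel_div hα ht.1 (hpos t ht)).continuousAt.continuousWithinAt) fun t ht => ?_
  rw [interior_Ioc] at ht
  have htT := Set.Ioo_subset_Ioc_self ht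
  have hF := hpos t htT
  have ht₀ := ht.1
  rw [(hasDerivAt_mlKernel_div hα ht.1 hF).deriv]
  exact div_neg_of_neg_of_pos (mul_neg_of_pos_of_neg (by positivity) (hneg t ht)) (by positivity)

theorem rlIntegral_mlKernel_sub (hα₁ : 1 < α) (hα₂ : α < 2) (q : ℝ) {t : ℝ} (ht : 0 < t) :
    rlIntegral (2 - α) (fun u => mlKernel α lam (α - 1) u - q * mlKernel α lam α u) t =
      mlKernel α lam 1 t - q * mlKernel α lam 2 t := by
  have hα : 0 < α := by linarith
  have hβ : 0 < α - 1 := by linarith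
  have hγ : 0 < 2 - α := by linarith
  rw [rlIntegral_sub_const_mul q (intervalIntegrable_sub_rpow_mul_mlKernel hα hβ hγ ht)
    (intervalIntegrable_sub_rpow_mul_mlKernel hα hα hγ ht), rlIntegral_mlKernel hα hβ hγ ht,
    rlIntegral_mlKernel hα hα hγ ht]
  ring_nf

theorem hasDerivAt_mlKernel_sub (hα : 0 < α) (q β : ℝ) {t : ℝ} (ht : 0 < t) :
    HasDerivAt (fun u => mlKernel α lam (β - 1) u - q * mlKernel α lam β u)
      (mlKernel α lam (β - 2) t - q * mlKernel α lam (β - 1) t) t :=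
  ((hasDerivAt_mlKernel hα (β - 1) ht).sub
    ((hasDerivAt_mlKernel hα β ht).const_mul q)).congr_deriv (by ring_nf)

theorem mlKernel_zero_index (hα : 0 < α) {t : ℝ} (ht : 0 < t) :
    mlKernel α lam 0 t = lam * mlKernel α lam α t := by
  rw [mlKernel_eq_mul_of_Gamma_eq_zero hα ht Real.Gamma_zero, zero_add]

theorem mlKernel_neg_one (hα : 0 < α) {t : ℝ} (ht : 0 < t) :
    mlKernel α lam (-1) t = lam * mlKernel α lam (α - 1) t := by
  have hΓ : Real.Gamma (-1) = 0 := by simpa using Real.Gamma_neg_nat_eq_zero 1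
  rw [mlKernel_eq_mul_of_Gamma_eq_zero hα ht hΓ, neg_add_eq_sub]

theorem secondDiff_rlIntegral_mlKernel_sub_isLittleO (hα₁ : 1 < α) (hα₂ : α < 2) (q : ℝ) {T : ℝ}
    (hT : 0 < T) (hroot : mlKernel α lam (α - 1) T - q * mlKernel α lam α T = 0) :
    secondDiff (rlIntegral (2 - α) fun u => mlKernel α lam (α - 1) u - q * mlKernel α lam α u) T
      =o[𝓝[>] 0] fun h => h ^ 2 := by
  have hα : 0 < α := by linarith
  set φ := rlIntegral (2 - α) fun u => mlKernel α lam (α - 1) u - q * mlKernel α lam α u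
  have hφ (t : ℝ) (ht : 0 < t) :
      HasDerivAt φ (mlKernel α lam 0 t - q * mlKernel α lam 1 t) t := by
    have := hasDerivAt_mlKernel_sub (lam := lam) hα q 2 ht
    norm_num at this
    refine this.congr_of_eventuallyEq ?_
    filter_upwards [lt_mem_nhds ht] with u hu
    exact rlIntegral_mlKernel_sub hα₁ hα₂ q hu
  have hφ' : HasDerivAt (fun t => mlKernel α lam 0 t - q * mlKernel α lam 1 t) 0 T := by
    have := hasDerivAt_mlKernel_sub (lam := lam) hα q 1 hT
    norm_num at this
    refine this.congr_deriv ?_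
    rw [mlKernel_neg_one hα hT, mlKernel_zero_index hα hT, mul_left_comm, ← mul_sub, hroot,
      mul_zero]
  have htaylor := taylor_two_isLittleO ((lt_mem_nhds hT).mono hφ) hφ'
  simp only [zero_div, zero_mul, sub_zero] at htaylor
  exact secondDiff_isLittleO (htaylor.mono nhdsWithin_le_nhds)

-- At a first zero `T` of the determinant, `f = F_{α-1} - q F_α` with `q = F_{α-1}(T) / F_α(T)`
-- is positive on `(0, T)` and touches zero at `T` to second order, while the second derivative
-- of `rlIntegral (2 - α) f = F_1 - q F_2` is `λ f`, which vanishes at `T`.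
theorem turanDet_ne_zero (hα₁ : 1 < α) (hα₂ : α < 2) {T : ℝ} (hT : 0 < T)
    (hpos : ∀ t ∈ Set.Ioc 0 T, 0 < mlKernel α lam α t)
    (hneg : ∀ t ∈ Set.Ioo 0 T, turanDet α lam α t < 0) : turanDet α lam α T ≠ 0 := by
  intro hdet
  have hα : 0 < α := by linarith
  have hFT : 0 < mlKernel α lam α T := hpos T ⟨hT, le_rfl⟩
  set q := mlKernel α lam (α - 1) T / mlKernel α lam α T
  have hroot : mlKernel α lam (α - 1) T - q * mlKernel α lam α T = 0 :=
    sub_eq_zero.2 (div_mul_cancel₀ _ hFT.ne').symm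
  have hroot' : mlKernel α lam (α - 2) T - q * mlKernel α lam (α - 1) T = 0 := by
    have h := mlKernel_mul_sub_sq (α := α) (lam := lam) α hT
    rw [hdet, mul_zero, sub_eq_zero] at h
    rw [div_mul_eq_mul_div, ← sq, ← h, mul_div_cancel_right₀ _ hFT.ne', sub_self]
  have hfpos : ∀ u ∈ Set.Ioo 0 T, 0 < mlKernel α lam (α - 1) u - q * mlKernel α lam α u :=
    fun u hu => by
      have hlt : q < mlKernel α lam (α - 1) u / mlKernel α lam α u :=
        strictAntiOn_mlKernel_div hα hpos hneg ⟨hu.1, hu.2.le⟩ ⟨hT, le_rfl⟩ hu.2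
      exact sub_pos.2 ((lt_div_iff₀ (hpos u ⟨hu.1, hu.2.le⟩)).1 hlt)
  have htouch : (fun u => mlKernel α lam (α - 1) u - q * mlKernel α lam α u) =O[𝓝 T]
      fun u => (u - T) ^ 2 :=
    isBigO_sub_sq ((lt_mem_nhds hT).mono fun u hu => hasDerivAt_mlKernel_sub hα q α hu)
      ((hasDerivAt_mlKernel hα (α - 2) hT).sub ((hasDerivAt_mlKernel hα (α - 1) hT).const_mul q))
      hroot hroot'
  have hint (t : ℝ) (ht : T ≤ t) : IntervalIntegrable (fun u => (t - u) ^ (2 - α - 1) *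
      (mlKernel α lam (α - 1) u - q * mlKernel α lam α u)) volume 0 t := by
    have hγ : 0 < 2 - α := by linarith
    have h (β : ℝ) (hβ : 0 < β) := intervalIntegrable_sub_rpow_mul_mlKernel (lam := lam) hα hβ hγ
      (hT.trans_le ht)
    simpa only [mul_sub, mul_left_comm _ q] using
      (h (α - 1) (by linarith)).sub ((h α hα).const_mul q)
  exact not_isLittleO_secondDiff_rlIntegral (by linarith) (by linarith) hT hfpos
    (htouch.mono nhdsWithin_le_nhds) hint
    (secondDiff_rlIntegral_mlKernel_sub_isLittleO hα₁ hα₂ q hT hroot)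

theorem turanDet_two {T : ℝ} (hT : 0 ≤ T) : turanDet 2 lam 2 T = turanDet 2 lam 2 0 := by
  rcases hT.eq_or_lt with rfl | hT
  · rfl
  have hder (t : ℝ) (ht : 0 < t) : HasDerivAt (turanDet 2 lam 2) 0 t := by
    have hF (β : ℝ) := hasDerivAt_mlKernel (lam := lam) two_pos β ht
    have hdet := ((hF 0).mul (hF 2)).sub ((hF 1).pow 2)
    norm_num [mlKernel_neg_one two_pos ht, mlKernel_zero_index two_pos ht] at hdet
    refine (hdet.congr_deriv (by ring)).congr_of_eventuallyEq ?_
    filter_upwards [lt_mem_nhds ht] with u hu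
    have := mlKernel_mul_sub_sq (lam := lam) (α := 2) 2 hu
    norm_num at this
    simpa using this.symm
  obtain ⟨c, -, hc⟩ := exists_hasDerivAt_eq_slope _ (fun _ => 0) hT
    (continuous_turanDet two_pos 2).continuousOn fun t ht => hder t ht.1
  rw [eq_comm, div_eq_zero_iff, or_iff_left (by linarith), sub_eq_zero] at hc
  exact hc

theorem turanDet_neg (hα₁ : 1 < α) (hα₂ : α ≤ 2) {b : ℝ}
    (hpos : ∀ t ∈ Set.Ioc 0 b, 0 < mlKernel α lam α t) :
    ∀ t ∈ Set.Icc 0 b, turanDet α lam α t < 0 := by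
  have hα : 0 < α := by linarith
  have hzero : turanDet α lam α 0 < 0 := turanDet_zero_neg hα.ne' hα₁
  rcases hα₂.eq_or_lt with rfl | hα₂
  · exact fun t ht => (turanDet_two ht.1).trans_lt hzero
  · exact neg_on_Icc_of_ne_zero (continuous_turanDet hα α).continuousOn hzero fun T hT hneg =>
      turanDet_ne_zero hα₁ hα₂ hT.1 (fun t ht => hpos t ⟨ht.1, ht.2.trans hT.2⟩)
        fun t ht => hneg t ⟨ht.1.le, ht.2⟩

end LogConcavity

/-! ### Bounds for the Green function -/

section Green

variable {α lam : ℝ}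

/-- The part `t ↦ t E_{α,α}(λ t^α)` of the Green's function that is regular at `t = 0`; it is
`t^{2-α}` times the kernel `F_α`. -/
noncomputable def greenWeight (α lam t : ℝ) : ℝ := t * mlPow α lam α t

/-- The gap between the normalised values at `x` of `E_{α,α-1}(λ x^α)` and of `greenWeight`, whose
linear vanishing at `x = 1` yields the lower bound for the Green's function. -/
noncomputable def greenGap (α lam x : ℝ) : ℝ :=
  mlPow α lam (α - 1) x / mlPow α lam (α - 1) 1 - greenWeight α lam x / greenWeight α lam 1

theorem contDiff_one_greenWeight (hα : 1 ≤ α) : ContDiff ℝ 1 (greenWeight α lam) :=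
  contDiff_id.mul (contDiff_one_mlPow hα α)

theorem greenWeight_zero : greenWeight α lam 0 = 0 := zero_mul _

theorem greenWeight_pos {t : ℝ} (ht : 0 < t) (hF : 0 < mlKernel α lam α t) :
    0 < greenWeight α lam t :=
  mul_pos ht ((mlKernel_pos_iff ht).1 hF)

theorem greenGap_eq {x : ℝ} (hx : 0 < x) : greenGap α lam x = x ^ (2 - α) *
    (mlKernel α lam (α - 1) x / mlKernel α lam (α - 1) 1 -
      mlKernel α lam α x / mlKernel α lam α 1) := by
  rw [greenGap, greenWeight, greenWeight, ← rpow_two_sub_mul_mlKernel hx,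
    ← rpow_two_sub_mul_mlKernel_sub_one hx, mlKernel_one, mlKernel_one, one_mul]
  ring

theorem greenGap_one (hB : mlPow α lam (α - 1) 1 ≠ 0) (hW : greenWeight α lam 1 ≠ 0) :
    greenGap α lam 1 = 0 := by
  rw [greenGap, div_self hB, div_self hW, sub_self]

theorem continuous_greenGap (hα : 1 ≤ α) : Continuous (greenGap α lam) :=
  ((continuous_mlPow (zero_lt_one.trans_le hα) _).div_const _).sub
    ((contDiff_one_greenWeight hα).continuous.div_const _)

theorem hasDerivAt_greenGap_one (hα : 0 < α) (hB : mlPow α lam (α - 1) 1 ≠ 0)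
    (hA : mlPow α lam α 1 ≠ 0) : HasDerivAt (greenGap α lam)
      (turanDet α lam α 1 / (mlPow α lam (α - 1) 1 * mlPow α lam α 1)) 1 := by
  have hF (β : ℝ) := hasDerivAt_mlKernel (α := α) (lam := lam) hα β one_pos
  have hprod := (Real.hasDerivAt_rpow_const (p := 2 - α) (.inl one_ne_zero)).mul
    (((hF (α - 1)).div_const (mlKernel α lam (α - 1) 1)).sub
      ((hF α).div_const (mlKernel α lam α 1)))
  refine (hprod.congr_deriv ?_).congr_of_eventuallyEq ?_
  · simp only [mlKernel_one, turanDet, Real.one_rpow, Pi.sub_apply, div_self hB, div_self hA,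
      show α - 1 - 1 = α - 2 by ring]
    field_simp
    ring
  · filter_upwards [lt_mem_nhds one_pos] with x hx using greenGap_eq hx

theorem greenGap_pos (hα : 0 < α) (hB : ∀ t ∈ Set.Icc (0 : ℝ) 1, 0 < mlPow α lam (α - 1) t)
    (hF : ∀ t ∈ Set.Ioc (0 : ℝ) 1, 0 < mlKernel α lam α t)
    (hdet : ∀ t ∈ Set.Ioo (0 : ℝ) 1, turanDet α lam α t < 0) :
    ∀ x ∈ Set.Ico (0 : ℝ) 1, 0 < greenGap α lam x := by
  rintro x ⟨hx₀, hx₁⟩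
  have hB₁ := hB 1 ⟨zero_le_one, le_rfl⟩
  have hF₁ := hF 1 ⟨one_pos, le_rfl⟩
  rcases hx₀.eq_or_lt with rfl | hx₀
  · rw [greenGap, greenWeight_zero, zero_div, sub_zero]
    exact div_pos (hB 0 ⟨le_rfl, zero_le_one⟩) hB₁
  have hratio := strictAntiOn_mlKernel_div hα hF hdet ⟨hx₀, hx₁.le⟩ ⟨one_pos, le_rfl⟩ hx₁
  simp only [div_lt_div_iff₀ hF₁ (hF x ⟨hx₀, hx₁.le⟩)] at hratio
  rw [greenGap_eq hx₀]
  refine mul_pos (Real.rpow_pos_of_pos hx₀ _) (sub_pos.2 ?_)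
  rw [div_lt_div_iff₀ hF₁ (by rwa [mlKernel_one])]
  linarith

theorem exists_mul_one_sub_le_greenGap (hα : 1 < α)
    (hB : ∀ t ∈ Set.Icc (0 : ℝ) 1, 0 < mlPow α lam (α - 1) t)
    (hF : ∀ t ∈ Set.Ioc (0 : ℝ) 1, 0 < mlKernel α lam α t)
    (hdet : ∀ t ∈ Set.Icc (0 : ℝ) 1, turanDet α lam α t < 0) :
    ∃ c, 0 < c ∧ ∀ x ∈ Set.Icc (0 : ℝ) 1, c * (1 - x) ≤ greenGap α lam x := by
  have hB₁ := hB 1 ⟨zero_le_one, le_rfl⟩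
  have hF₁ := hF 1 ⟨one_pos, le_rfl⟩
  have hA₁ := (mlKernel_pos_iff one_pos).1 hF₁
  exact exists_mul_sub_le_of_hasDerivAt_neg (continuous_greenGap hα.le).continuousOn zero_le_one
    (greenGap_one hB₁.ne' (greenWeight_pos one_pos hF₁).ne')
    (hasDerivAt_greenGap_one (by linarith) hB₁.ne' hA₁.ne')
    (div_neg_of_neg_of_pos (hdet 1 ⟨zero_le_one, le_rfl⟩) (mul_pos hB₁ hA₁))
    (greenGap_pos (by linarith) hB hF fun t ht => hdet t (Set.Ioo_subset_Icc_self ht))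

theorem greenG_eq (hα : α ≠ 1) {t s : ℝ} (hs : s < 1) : greenG α lam t s =
    mlKernel α lam α t * (mlKernel α lam (α - 1) (1 - s) / mlKernel α lam (α - 1) 1) -
      mlKernel α lam α (max (t - s) 0) := by
  have hinv : (1 - s) ^ (2 - α) = ((1 - s) ^ (α - 1 - 1))⁻¹ := by
    rw [← Real.rpow_neg (sub_pos.2 hs).le]; ring_nf
  rw [mlKernel_one, mlPow_one]
  by_cases hst : s ≤ t
  · rw [greenG, if_pos hst, max_eq_left (sub_nonneg.2 hst), hinv]
    simp only [mlKernel, mlPow]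
    field_simp
  · rw [greenG, if_neg hst, max_eq_right (by linarith), mlKernel_zero hα, sub_zero, hinv]
    simp only [mlKernel, mlPow]
    field_simp

theorem rpow_mul_greenG_div_eq (hα : α ≠ 1) {t s : ℝ} (ht : 0 < t) (hs : s < 1) :
    t ^ (2 - α) * greenG α lam t s / (s * (1 - s) ^ (α - 2)) =
      (greenWeight α lam t * (mlPow α lam (α - 1) (1 - s) / mlPow α lam (α - 1) 1) -
        (t * (1 - s)) ^ (2 - α) * mlKernel α lam α (max (t - s) 0)) / s := by
  have hs' : 0 < 1 - s := sub_pos.2 hs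
  have hinv : (1 - s) ^ (α - 2) = ((1 - s) ^ (2 - α))⁻¹ := by
    rw [← Real.rpow_neg hs'.le, neg_sub]
  rw [greenG_eq hα hs, greenWeight, ← rpow_two_sub_mul_mlKernel ht,
    ← rpow_two_sub_mul_mlKernel_sub_one hs', mlKernel_one, Real.mul_rpow ht.le hs'.le, hinv]
  field_simp

theorem mlKernel_shift_mul_le (hα : 1 < α)
    (hF : ∀ t ∈ Set.Ioc (0 : ℝ) 1, 0 < mlKernel α lam α t)
    (hdet : ∀ t ∈ Set.Ioo (0 : ℝ) 1, turanDet α lam α t < 0) {t s : ℝ}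
    (ht : t ∈ Set.Ioc (0 : ℝ) 1) (hs : s ∈ Set.Ico (0 : ℝ) 1) :
    mlKernel α lam α (max (t - s) 0) * mlKernel α lam α 1 ≤
      mlKernel α lam α (1 - s) * mlKernel α lam α t := by
  have hα₀ : 0 < α := by linarith
  have hF₁ := hF 1 ⟨one_pos, le_rfl⟩
  rcases le_or_gt t s with hts | hst
  · rw [max_eq_right (sub_nonpos.2 hts), mlKernel_zero hα.ne', zero_mul]
    exact (mul_pos (hF _ ⟨sub_pos.2 hs.2, sub_le_self 1 hs.1⟩) (hF t ht)).le
  · have hmono := monotoneOn_shift_div hs.1 (fun x hx => hasDerivAt_mlKernel hα₀ α hx.1) hF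
      (strictAntiOn_mlKernel_div hα₀ hF hdet).antitoneOn
    have hle := hmono ⟨hst, ht.2⟩ ⟨hs.2, le_rfl⟩ ht.2
    rw [max_eq_left (sub_nonneg.2 hst.le)]
    exact (div_le_div_iff₀ (hF t ht) hF₁).1 hle

theorem rpow_mul_mlKernel_mul_greenWeight {t x : ℝ} (ht : 0 < t) (hx : 0 < x) :
    (t * x) ^ (2 - α) * (mlKernel α lam α t * mlKernel α lam α x) =
      greenWeight α lam t * greenWeight α lam x := by
  rw [greenWeight, greenWeight, ← rpow_two_sub_mul_mlKernel ht, ← rpow_two_sub_mul_mlKernel hx,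
    Real.mul_rpow ht.le hx.le]
  ring

theorem greenWeight_mul_greenGap_le (hα : 1 < α)
    (hF : ∀ t ∈ Set.Ioc (0 : ℝ) 1, 0 < mlKernel α lam α t)
    (hdet : ∀ t ∈ Set.Ioo (0 : ℝ) 1, turanDet α lam α t < 0) {t s : ℝ}
    (ht : t ∈ Set.Ioc (0 : ℝ) 1) (hs : s ∈ Set.Ico (0 : ℝ) 1) :
    greenWeight α lam t * greenGap α lam (1 - s) ≤
      greenWeight α lam t * (mlPow α lam (α - 1) (1 - s) / mlPow α lam (α - 1) 1) -
        (t * (1 - s)) ^ (2 - α) * mlKernel α lam α (max (t - s) 0) := by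
  have hs' : 0 < 1 - s := sub_pos.2 hs.2
  have hF₁ := hF 1 ⟨one_pos, le_rfl⟩
  have hshift : (t * (1 - s)) ^ (2 - α) * mlKernel α lam α (max (t - s) 0) ≤
      greenWeight α lam t * greenWeight α lam (1 - s) / greenWeight α lam 1 := by
    rw [← rpow_mul_mlKernel_mul_greenWeight ht.1 hs', mul_div_assoc, greenWeight, one_mul,
      ← mlKernel_one]
    have := (mul_pos ht.1 hs').le
    gcongr
    rw [le_div_iff₀ hF₁, mul_comm (mlKernel α lam α t)]
    exact mlKernel_shift_mul_le hα hF hdet ht hs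
  rw [greenGap, mul_sub, ← mul_div_assoc _ (greenWeight α lam (1 - s))]
  linarith

theorem greenWeight_max_le (hα₁ : 1 < α) (hα₂ : α ≤ 2)
    (hF : ∀ t ∈ Set.Ioc (0 : ℝ) 1, 0 < mlKernel α lam α t) {t s : ℝ}
    (ht : t ∈ Set.Icc (0 : ℝ) 1) (hs : s ∈ Set.Icc (0 : ℝ) 1) :
    greenWeight α lam (max (t - s) 0) ≤
      (t * (1 - s)) ^ (2 - α) * mlKernel α lam α (max (t - s) 0) := by
  rcases le_or_gt t s with hts | hst
  · rw [max_eq_right (sub_nonpos.2 hts), greenWeight_zero, mlKernel_zero hα₁.ne', mul_zero]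
  · have hts : 0 < t - s := sub_pos.2 hst
    have hpos := hF _ ⟨hts, (sub_le_self t hs.1).trans ht.2⟩
    rw [max_eq_left hts.le, greenWeight, ← rpow_two_sub_mul_mlKernel hts]
    gcongr
    nlinarith [hs.1, ht.2]

theorem exists_greenWeight_mul_sub_le (hα : 1 ≤ α) (hB : 0 < mlPow α lam (α - 1) 1) :
    ∃ M, 0 < M ∧ ∀ t ∈ Set.Icc (0 : ℝ) 1, ∀ s ∈ Set.Icc (0 : ℝ) 1,
      greenWeight α lam t * (mlPow α lam (α - 1) (1 - s) / mlPow α lam (α - 1) 1) -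
        greenWeight α lam (max (t - s) 0) ≤ M * s := by
  obtain ⟨KW, hKW, hW⟩ :=
    exists_abs_sub_le_of_contDiff (contDiff_one_greenWeight (lam := lam) hα) 0 1
  obtain ⟨KB, hKB, hB'⟩ :=
    exists_abs_sub_le_of_contDiff (contDiff_one_mlPow (lam := lam) hα (α - 1)) 0 1
  refine ⟨KW * KB / mlPow α lam (α - 1) 1 + KW, by positivity, fun t ht s hs => ?_⟩
  have hzero : (0 : ℝ) ∈ Set.Icc 0 1 := ⟨le_rfl, zero_le_one⟩
  have hWt : |greenWeight α lam t| ≤ KW := by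
    have h := hW t ht 0 hzero
    rw [greenWeight_zero, sub_zero, sub_zero, abs_of_nonneg ht.1] at h
    nlinarith [ht.2]
  have hWs : greenWeight α lam t - greenWeight α lam (max (t - s) 0) ≤ KW * s := by
    have hmax : max (t - s) 0 ∈ Set.Icc (0 : ℝ) 1 :=
      ⟨le_max_right _ _, max_le (by linarith [ht.2, hs.1]) zero_le_one⟩
    refine (le_abs_self _).trans ((hW t ht _ hmax).trans ?_)
    gcongr
    rw [abs_of_nonneg (sub_nonneg.2 (max_le (sub_le_self t hs.1) ht.1))]
    linarith [le_max_left (t - s) 0]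
  have hBs : |mlPow α lam (α - 1) (1 - s) - mlPow α lam (α - 1) 1| ≤ KB * s := by
    have h := hB' (1 - s) ⟨by linarith [hs.2], by linarith [hs.1]⟩ 1 ⟨zero_le_one, le_rfl⟩
    rwa [show 1 - s - 1 = -s by ring, abs_neg, abs_of_nonneg hs.1] at h
  have hprod : greenWeight α lam t *
      (mlPow α lam (α - 1) (1 - s) - mlPow α lam (α - 1) 1) ≤ KW * (KB * s) := by
    refine (le_abs_self _).trans ?_
    rw [abs_mul]
    gcongr
  calc _ = greenWeight α lam t * (mlPow α lam (α - 1) (1 - s) - mlPow α lam (α - 1) 1) /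
        mlPow α lam (α - 1) 1 + (greenWeight α lam t - greenWeight α lam (max (t - s) 0)) := by
        field_simp
        ring
    _ ≤ KW * (KB * s) / mlPow α lam (α - 1) 1 + KW * s := by gcongr
    _ = _ := by ring

theorem mlKernel_self_pos (hα : 1 < α)
    (hB : ∀ t ∈ Set.Icc (0 : ℝ) 1, 0 < mlPow α lam (α - 1) t) :
    ∀ t ∈ Set.Ioc (0 : ℝ) 1, 0 < mlKernel α lam α t :=
  mlKernel_pos (by linarith) hα fun t ht =>
    (mlKernel_pos_iff ht.1).2 (hB t (Set.Ioo_subset_Icc_self ht))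

theorem exists_mul_greenWeight_le_rpow_mul_greenG_div (hα₁ : 1 < α) (hα₂ : α ≤ 2)
    (hB : ∀ t ∈ Set.Icc (0 : ℝ) 1, 0 < mlPow α lam (α - 1) t) :
    ∃ c, 0 < c ∧ ∀ t ∈ Set.Ioo (0 : ℝ) 1, ∀ s ∈ Set.Ioo (0 : ℝ) 1,
      c * greenWeight α lam t ≤ t ^ (2 - α) * greenG α lam t s / (s * (1 - s) ^ (α - 2)) := by
  have hF := mlKernel_self_pos hα₁ hB
  have hdet := turanDet_neg hα₁ hα₂ hF
  obtain ⟨c, hc, hgap⟩ := exists_mul_one_sub_le_greenGap hα₁ hB hF hdet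
  refine ⟨c, hc, fun t ht s hs => ?_⟩
  have ht' := Set.Ioo_subset_Ioc_self ht
  have hWt := greenWeight_pos ht.1 (hF t ht')
  have hgap_s := hgap (1 - s) ⟨sub_nonneg.2 hs.2.le, sub_le_self 1 hs.1.le⟩
  rw [sub_sub_cancel] at hgap_s
  rw [rpow_mul_greenG_div_eq hα₁.ne' ht.1 hs.2, le_div_iff₀ hs.1]
  calc c * greenWeight α lam t * s = greenWeight α lam t * (c * s) := by ring
    _ ≤ greenWeight α lam t * greenGap α lam (1 - s) := by gcongr
    _ ≤ _ := greenWeight_mul_greenGap_le hα₁ hF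
      (fun u hu => hdet u (Set.Ioo_subset_Icc_self hu)) ht' (Set.Ioo_subset_Ico_self hs)

theorem exists_rpow_mul_greenG_div_le (hα₁ : 1 < α) (hα₂ : α ≤ 2)
    (hB : ∀ t ∈ Set.Icc (0 : ℝ) 1, 0 < mlPow α lam (α - 1) t) :
    ∃ M, 0 < M ∧ ∀ t ∈ Set.Ioo (0 : ℝ) 1, ∀ s ∈ Set.Ioo (0 : ℝ) 1,
      t ^ (2 - α) * greenG α lam t s / (s * (1 - s) ^ (α - 2)) ≤ M := by
  obtain ⟨M, hM, hupper⟩ := exists_greenWeight_mul_sub_le hα₁.le (hB 1 ⟨zero_le_one, le_rfl⟩)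
  refine ⟨M, hM, fun t ht s hs => ?_⟩
  have ht' := Set.Ioo_subset_Icc_self ht
  have hs' := Set.Ioo_subset_Icc_self hs
  rw [rpow_mul_greenG_div_eq hα₁.ne' ht.1 hs.2, div_le_iff₀ hs.1]
  refine le_trans ?_ (hupper t ht' s hs')
  gcongr
  exact greenWeight_max_le hα₁ hα₂ (mlKernel_self_pos hα₁ hB) ht' hs'

end Green

/-- Sharp two-sided bounds for the Green's function: for `λ > λ₁*` there exist `M > 0` and
a continuous `m` with `m(0) = 0`, `m > 0` on `(0,1]`, such that
`m(t) ≤ t^{2-α} G(t,s) / (s (1-s)^{α-2}) ≤ M` for all `t,s ∈ (0,1)`. -/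
theorem stmt9 (α lam lam1 : ℝ) (hα1 : 1 < α) (hα2 : α ≤ 2)
    (hlam1 : IsGreatest {μ : ℝ | ML α (α - 1) μ = 0} lam1) (hlam : lam1 < lam) :
    ∃ M : ℝ, 0 < M ∧ ∃ m : ℝ → ℝ, ContinuousOn m (Set.Icc 0 1) ∧ m 0 = 0 ∧
      (∀ t ∈ Set.Ioc (0:ℝ) 1, 0 < m t) ∧
      ∀ t ∈ Set.Ioo (0:ℝ) 1, ∀ s ∈ Set.Ioo (0:ℝ) 1,
        m t ≤ t ^ (2 - α) * greenG α lam t s / (s * (1 - s) ^ (α - 2)) ∧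
        t ^ (2 - α) * greenG α lam t s / (s * (1 - s) ^ (α - 2)) ≤ M := by
  have hzeros (μ : ℝ) (hμ : ML α (α - 1) μ = 0) : μ < lam := (hlam1.2 hμ).trans_lt hlam
  have hB : ∀ t ∈ Set.Icc (0 : ℝ) 1, 0 < mlPow α lam (α - 1) t :=
    mlPow_pos (by linarith) (sub_pos.2 hα1) hzeros
  obtain ⟨c, hc, hlower⟩ := exists_mul_greenWeight_le_rpow_mul_greenG_div hα1 hα2 hB
  obtain ⟨M, hM, hupper⟩ := exists_rpow_mul_greenG_div_le hα1 hα2 hB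
  refine ⟨M, hM, fun t => c * greenWeight α lam t, ?_, ?_, fun t ht => ?_,
    fun t ht s hs => ⟨hlower t ht s hs, hupper t ht s hs⟩⟩
  · exact ((contDiff_one_greenWeight hα1.le).continuous.const_mul c).continuousOn
  · simp only [greenWeight_zero, mul_zero]
  · exact mul_pos hc (greenWeight_pos ht.1 (mlKernel_self_pos hα1 hB t ht))
end
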